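/- arXiv:1707.05077 — 4 statements merged into one kernel-verified Lean document; each statement's English description precedes it below -/
import Mathlib

section
/- Let k and f be natural numbers with 0 < 2(f+1) - k ≤ k, and let λ ≥ 1 be a real number. Suppose g_1, …, g_k : ℝ_{≥0} → ℝ are 1-Lipschitz functions with g_r(0) = 0 for every r (trajectories of k robots starting at the origin, moving at speed at most 1). If for every real x with |x| ≥ 1 there are at least f+1 indices r such that g_r(t) = x for some t ∈ [0, λ|x|], then λ ≥ 2·ρ^ρ/(ρ-1)^{ρ-1} + 1, where ρ := 2(f+1)/k. -/
open scoped NNReal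

/-!
Put `s = 2(f+1) - k` and `μ = (λ-1)/2`. By inclusion–exclusion, for every `x ≥ 1` at least `s`
robots visit both `x` and `-x` within time `λx`. A robot that completes the pair `±x` at time `τ`
after having been as far as `t ≥ x` on the opposite side has *cost* `(τ - x)/2`, which is at least
`t` plus the cost of any pair whose own `t` is smaller than `x`. So every `x ≥ 1` is covered by `s`
robots at cost at most `μx`.

Now run a greedy process: let the *load* of a robot be its latest cost and its *frontier* the
latest `t`, and always serve a point just beyond the `s`-th largest frontier. By weighted AM–GM each
such step multiplies `(∏ loads) ^ s / (∏ s largest frontiers) ^ k` by at least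
`(s+k)^(s+k) / (s^s k^k μ^k)`, up to an error that tends to `0`, while this quantity stays bounded.
Hence `(s+k)^(s+k) / (s^s k^k) ≤ μ^k`, and the left side is the `k`-th power of `ρ^ρ / (ρ-1)^(ρ-1)`.
-/

section Inequalities

/-- The constant `(s+k)^(s+k) / (s^s k^k)`, the `k`-th power of `ρ^ρ / (ρ-1)^(ρ-1)` at
`ρ = (s+k)/k`. Since `0 ^ 0 = 1` it equals `1` when `s = 0` or `k = 0`. -/
noncomputable def entropyConst (s k : ℕ) : ℝ :=
  (s + k : ℝ) ^ (s + k) / ((s : ℝ) ^ s * (k : ℝ) ^ k)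

lemma entropyConst_pos (s k : ℕ) : 0 < entropyConst s k := by
  have pow_self_pos (n : ℕ) : 0 < (n : ℝ) ^ n := mod_cast Nat.pow_self_pos
  have h := pow_self_pos (s + k)
  push_cast at h
  exact div_pos h (mul_pos (pow_self_pos s) (pow_self_pos k))

lemma rpow_self_div_rpow_self_pow_eq_entropyConst {s k : ℕ} (hk : 0 < k) {ρ : ℝ}
    (hρ : ρ = (s + k) / k) : (ρ ^ ρ / (ρ - 1) ^ (ρ - 1)) ^ k = entropyConst s k := by
  have hk' : (0 : ℝ) < k := mod_cast hk
  have hρ_sub : ρ - 1 = s / k := by rw [hρ]; field_simp; ring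
  have rpow_self_pow {x : ℝ} {n : ℕ} (hx : x = n / k) : (x ^ x) ^ k = x ^ n := by
    rw [← Real.rpow_natCast, ← Real.rpow_mul (by rw [hx]; positivity), hx,
      div_mul_cancel₀ _ hk'.ne', Real.rpow_natCast]
  rw [div_pow, rpow_self_pow (n := s + k) (by push_cast; exact hρ), rpow_self_pow hρ_sub, hρ_sub,
    hρ, div_pow, div_pow, pow_add (k : ℝ), entropyConst]
  have hs : (s : ℝ) ^ s ≠ 0 := mod_cast Nat.pow_self_pos.ne'
  field_simp

lemma add_pow_mul_pow_mul_pow_le (s k : ℕ) {p q : ℝ} (hp : 0 ≤ p) (hq : 0 ≤ q) :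
    (s + k : ℝ) ^ (s + k) * (p ^ s * q ^ k) ≤ (s * p + k * q) ^ (s + k) := by
  rcases Nat.eq_zero_or_pos (s + k) with hzero | hpos
  · obtain ⟨rfl, rfl⟩ := Nat.add_eq_zero_iff.1 hzero
    simp
  have hn : (0 : ℝ) < s + k := mod_cast hpos
  have amgm := Real.geom_mean_le_arith_mean2_weighted (w₁ := s / (s + k)) (w₂ := k / (s + k))
    (by positivity) (by positivity) hp hq (by field_simp)
  have rpow_div_pow {x : ℝ} (hx : 0 ≤ x) (n : ℕ) :
      (x ^ ((n : ℝ) / (s + k))) ^ (s + k) = x ^ n := by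
    rw [← Real.rpow_natCast, ← Real.rpow_mul hx, Nat.cast_add, div_mul_cancel₀ _ hn.ne',
      Real.rpow_natCast]
  calc (s + k : ℝ) ^ (s + k) * (p ^ s * q ^ k)
      = ((s + k) * (p ^ ((s : ℝ) / (s + k)) * q ^ ((k : ℝ) / (s + k)))) ^ (s + k) := by
        rw [mul_pow, mul_pow, rpow_div_pow hp, rpow_div_pow hq]
    _ ≤ ((s + k) * (s / (s + k) * p + k / (s + k) * q)) ^ (s + k) := by gcongr
    _ = (s * p + k * q) ^ (s + k) := by congr 1; field_simp

lemma entropyConst_mul_pow_mul_pow_le (s k : ℕ) {a b : ℝ} (ha : 0 ≤ a) (hb : 0 ≤ b) :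
    entropyConst s k * (a ^ s * b ^ k) ≤ (a + b) ^ (s + k) := by
  have mul_div_le {c : ℝ} (hc : 0 ≤ c) (n : ℕ) : (n : ℝ) * (c / n) ≤ c := by
    rw [mul_div_left_comm]
    exact mul_le_of_le_one_right hc (div_self_le_one _)
  calc entropyConst s k * (a ^ s * b ^ k)
      = (s + k : ℝ) ^ (s + k) * ((a / s) ^ s * (b / k) ^ k) := by
        rw [entropyConst, div_mul_eq_mul_div, mul_div_assoc, mul_div_mul_comm, div_pow, div_pow]
    _ ≤ (s * (a / s) + k * (b / k)) ^ (s + k) :=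
        add_pow_mul_pow_mul_pow_le s k (by positivity) (by positivity)
    _ ≤ (a + b) ^ (s + k) := by gcongr <;> apply mul_div_le <;> assumption

lemma le_of_forall_exists_mul_le {V : Set ℝ} (hne : V.Nonempty) (hbdd : BddAbove V)
    (hpos : ∀ v ∈ V, 0 < v) {a b : ℝ} (ha : 0 < a) (hb : 0 ≤ b)
    (hstep : ∀ v ∈ V, ∃ v' ∈ V, a * v ≤ b * v') : a ≤ b := by
  have hsup_pos : 0 < sSup V := by
    obtain ⟨v, hv⟩ := hne
    exact (hpos v hv).trans_le (le_csSup hbdd hv)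
  refine le_of_mul_le_mul_right ?_ hsup_pos
  rw [← le_div_iff₀' ha]
  refine csSup_le hne fun v hv => (le_div_iff₀' ha).2 ?_
  obtain ⟨v', hv', hle⟩ := hstep v hv
  exact hle.trans (mul_le_mul_of_nonneg_left (le_csSup hbdd hv') hb)

end Inequalities

section Finite

variable {ι : Type*}

lemma ncard_add_ncard_le_card_add_ncard_inter [Finite ι] (S T : Set ι) :
    S.ncard + T.ncard ≤ Nat.card ι + (S ∩ T).ncard := by
  rw [← Set.ncard_union_add_ncard_inter S T]
  gcongr
  exact Set.ncard_le_card _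

lemma exists_mem_lt_of_card_le_ncard {α : Type*} [LinearOrder α] {A : Finset ι} {S : Set ι}
    {e : ι → α} {x : α} {q : ι} (hcard : A.card ≤ S.ncard) (hq : q ∈ A) (hqx : e q < x)
    (hout : ∀ i ∉ A, e i < x) : ∃ r ∈ S, e r < x := by
  classical
  by_contra! hS
  have hsub : S ⊆ (A.erase q : Finset ι) := fun r hr => by
    have hxr := hS r hr
    refine Finset.mem_coe.2 (Finset.mem_erase.2 ⟨?_, ?_⟩)
    · rintro rfl
      exact hxr.not_gt hqx
    · by_contra hrA
      exact hxr.not_gt (hout r hrA)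
  have hlt := Set.ncard_le_ncard hsub (Finset.finite_toSet _)
  rw [Set.ncard_coe_finset] at hlt
  exact (hcard.trans hlt).not_gt (Finset.card_erase_lt_of_mem hq)

lemma prod_insert_erase_update_mul [DecidableEq ι] {M : Type*} [CommMonoid M] {A : Finset ι}
    {r o : ι} (ho : o ∈ A) (hr : r ∉ A.erase o) (e : ι → M) (t : M) :
    (∏ j ∈ insert r (A.erase o), Function.update e r t j) * e o = t * ∏ j ∈ A, e j := by
  rw [Finset.prod_insert hr, Function.update_self, Finset.prod_update_of_notMem hr, mul_assoc,
    Finset.prod_erase_mul _ _ ho]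

end Finite

/-- Laws governing how a searcher covers the half-line, where `P x w t` means that `x` is
covered at cost `w` during an excursion turning at `t`. The cost of an excursion includes its own
turning distance and, if it covers a point beyond the turning point of another excursion, the cost
of the latter. -/
structure IsExcursionCost (P : ℝ → ℝ → ℝ → Prop) : Prop where
  le_turn : ∀ {x w t}, P x w t → x ≤ t
  turn_le : ∀ {x w t}, P x w t → t ≤ w
  add_turn_le : ∀ {x w t y w' t'}, P x w t → P y w' t' → t < y → w + t' ≤ w'

/-- A stage of the greedy process for the searchers `P r`: `L r` is the load of searcher `r`, `e r`
its frontier, and `A` singles out the searchers with the largest frontiers. Costs are shifted by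
`ε`, so that loads are positive from the start, and `m` bounds the ratio of loads to frontiers. -/
structure IsGreedyStage {ι : Type*} (P : ι → ℝ → ℝ → ℝ → Prop) (ε m : ℝ) (A : Finset ι)
    (L e : ι → ℝ) : Prop where
  load_add_le : ∀ {r y w t}, P r y w t → e r < y → L r + t ≤ ε + w
  load_pos : ∀ r, 0 < L r
  one_le_frontier : ∀ r, 1 ≤ e r
  load_le : ∀ r, ∀ j ∈ A, L r ≤ m * e j
  frontier_le : ∀ i ∉ A, ∀ j ∈ A, e i ≤ e j

/-- The potential of the greedy process: loads against the frontiers of the searchers in `A`, with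
exponents balanced so that it is bounded by a constant once loads are at most `m` times the
frontiers in `A`. -/
noncomputable def greedyPotential {ι : Type*} [Fintype ι] (A : Finset ι) (L e : ι → ℝ) : ℝ :=
  (∏ r, L r) ^ A.card / (∏ j ∈ A, e j) ^ Fintype.card ι

section Potential

variable {ι : Type*} [Fintype ι] {A : Finset ι} {L e : ι → ℝ}

lemma greedyPotential_pos (hL : ∀ r, 0 < L r) (he : ∀ j ∈ A, 0 < e j) :
    0 < greedyPotential A L e :=
  div_pos (pow_pos (Finset.prod_pos fun r _ => hL r) _) (pow_pos (Finset.prod_pos he) _)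

lemma greedyPotential_le {m : ℝ} (hL : ∀ r, 0 ≤ L r) (he : ∀ j ∈ A, 0 < e j)
    (hle : ∀ r, ∀ j ∈ A, L r ≤ m * e j) :
    greedyPotential A L e ≤ (m ^ A.card) ^ Fintype.card ι := by
  rw [greedyPotential, div_le_iff₀ (pow_pos (Finset.prod_pos he) _)]
  calc (∏ r, L r) ^ A.card = ∏ r, ∏ _j ∈ A, L r := by
        simp only [Finset.prod_const, Finset.prod_pow]
    _ ≤ ∏ _r : ι, ∏ j ∈ A, m * e j :=
        Finset.prod_le_prod (fun r _ => Finset.prod_nonneg fun _ _ => hL r) fun r _ =>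
          Finset.prod_le_prod (fun _ _ => hL r) (hle r)
    _ = (m ^ A.card) ^ Fintype.card ι * (∏ j ∈ A, e j) ^ Fintype.card ι := by
        rw [Finset.prod_const, Finset.prod_mul_distrib, Finset.prod_const, mul_pow,
          Finset.card_univ]

lemma greedyPotential_update_mul [DecidableEq ι] {r o : ι} {l t : ℝ} (hL : L r ≠ 0) (ht : t ≠ 0)
    (he : ∀ j ∈ A, e j ≠ 0) (ho : o ∈ A) (hr : r ∉ A.erase o) :
    greedyPotential (insert r (A.erase o)) (Function.update L r l) (Function.update e r t) *
        (L r ^ A.card * t ^ Fintype.card ι) =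
      greedyPotential A L e * (l ^ A.card * e o ^ Fintype.card ι) := by
  have hcard : (insert r (A.erase o)).card = A.card := by
    rw [Finset.card_insert_of_notMem hr, Finset.card_erase_add_one ho]
  have hloads : (∏ i, Function.update L r l i) = l * (∏ i, L i) / L r := by
    have h := prod_insert_erase_update_mul (Finset.mem_univ r) (Finset.notMem_erase r _) L l
    rwa [Finset.insert_erase (Finset.mem_univ r), ← eq_div_iff hL] at h
  have hfrontiers : (∏ j ∈ insert r (A.erase o), Function.update e r t j) =
      t * (∏ j ∈ A, e j) / e o :=
    (eq_div_iff (he o ho)).2 (prod_insert_erase_update_mul ho hr e t)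
  have hprod : ∏ j ∈ A, e j ≠ 0 := Finset.prod_ne_zero_iff.2 he
  have heo := he o ho
  rw [greedyPotential, greedyPotential, hcard, hloads, hfrontiers]
  simp only [div_pow, mul_pow]
  field_simp

end Potential

lemma entropyConst_mul_le_of_load_le (s k : ℕ) {L l t m b : ℝ} (hL : 0 ≤ L)
    (ht : 0 ≤ t) (hl : L + t ≤ l) (hlm : l ≤ m * b) :
    entropyConst s k * (L ^ s * t ^ k) ≤ m ^ k * (l ^ s * b ^ k) := by
  have hl_nonneg : 0 ≤ l := by linarith
  calc entropyConst s k * (L ^ s * t ^ k) ≤ (L + t) ^ (s + k) :=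
        entropyConst_mul_pow_mul_pow_le s k hL ht
    _ ≤ l ^ (s + k) := by gcongr
    _ = l ^ s * l ^ k := pow_add l s k
    _ ≤ l ^ s * (m * b) ^ k := by gcongr
    _ = m ^ k * (l ^ s * b ^ k) := by rw [mul_pow]; ring

namespace IsGreedyStage

variable {ι : Type*} {P : ι → ℝ → ℝ → ℝ → Prop} {ε m : ℝ} {A : Finset ι} {L e : ι → ℝ}

lemma const (hP : ∀ r, IsExcursionCost (P r)) (hε : 0 < ε) (hεm : ε ≤ m) (A : Finset ι) :
    IsGreedyStage P ε m A (fun _ => ε) (fun _ => 1) where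
  load_add_le h _ := by linarith [(hP _).turn_le h]
  load_pos _ := hε
  one_le_frontier _ := le_rfl
  load_le _ _ _ := by simpa using hεm
  frontier_le _ _ _ _ := le_rfl

lemma frontier_pos (S : IsGreedyStage P ε m A L e) (r : ι) : 0 < e r :=
  one_pos.trans_le (S.one_le_frontier r)

lemma potential_pos [Fintype ι] (S : IsGreedyStage P ε m A L e) : 0 < greedyPotential A L e :=
  greedyPotential_pos S.load_pos fun j _ => S.frontier_pos j

lemma potential_le [Fintype ι] (S : IsGreedyStage P ε m A L e) :
    greedyPotential A L e ≤ (m ^ A.card) ^ Fintype.card ι :=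
  greedyPotential_le (fun r => (S.load_pos r).le) (fun j _ => S.frontier_pos j) S.load_le

/-- The searcher `r` takes the place of `o` among those with the largest frontiers; `o = r` covers
the case `r ∈ A`. -/
lemma update [DecidableEq ι] (S : IsGreedyStage P ε m A L e) (hP : ∀ r, IsExcursionCost (P r))
    (hm : 0 ≤ m) {q r o : ι} (hq : q ∈ A) (hmin : ∀ j ∈ A, e q ≤ e j) (hor : o ≠ r → o = q)
    {x w t : ℝ} (hx : P r x w t) (hqx : e q ≤ x) (hrx : e r < x) (hw : ε + w ≤ m * e q) :
    IsGreedyStage P ε m (insert r (A.erase o)) (Function.update L r (ε + w))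
      (Function.update e r t) := by
  have hxt : x ≤ t := (hP r).le_turn hx
  have hq_le : ∀ j ∈ insert r (A.erase o), e q ≤ Function.update e r t j := by
    intro j hj
    rcases eq_or_ne j r with rfl | hjr
    · simpa using hqx.trans hxt
    · rw [Function.update_of_ne hjr]
      exact hmin j (Finset.mem_of_mem_erase (Finset.mem_of_mem_insert_of_ne hj hjr))
  constructor
  case load_add_le =>
    intro i y w' t' hy hey
    rcases eq_or_ne i r with rfl | hir
    · rw [Function.update_self] at hey ⊢
      linarith [(hP i).add_turn_le hx hy hey]
    · rw [Function.update_of_ne hir] at hey ⊢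
      exact S.load_add_le hy hey
  case load_pos =>
    refine (Function.forall_update_iff L fun _ l => 0 < l).2 ⟨?_, fun i _ => S.load_pos i⟩
    linarith [S.load_pos r, S.frontier_pos r, S.load_add_le hx hrx]
  case one_le_frontier =>
    refine (Function.forall_update_iff e fun _ l => 1 ≤ l).2 ⟨?_, fun i _ => S.one_le_frontier i⟩
    linarith [S.one_le_frontier r]
  case load_le =>
    have hload : ∀ i, Function.update L r (ε + w) i ≤ m * e q :=
      (Function.forall_update_iff L fun _ l => l ≤ m * e q).2 ⟨hw, fun i _ => S.load_le i q hq⟩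
    exact fun i j hj => (hload i).trans (mul_le_mul_of_nonneg_left (hq_le j hj) hm)
  case frontier_le =>
    intro i hi j hj
    obtain ⟨hir, hio⟩ : i ≠ r ∧ i ∉ A.erase o := by simpa [not_or] using hi
    rw [Function.update_of_ne hir]
    refine le_trans ?_ (hq_le j hj)
    by_cases hiA : i ∈ A
    · obtain rfl : i = o := by_contra fun hne => hio (Finset.mem_erase.2 ⟨hne, hiA⟩)
      rw [hor hir]
    · exact S.frontier_le i hiA q hq

lemma exists_potential_growth [Fintype ι] (S : IsGreedyStage P ε m A L e)
    (hP : ∀ r, IsExcursionCost (P r)) (hA : A.Nonempty)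
    (hcov : ∀ y, 1 ≤ y → ∃ x > y,
      A.card ≤ {r | ∃ w t, P r x w t ∧ ε + w ≤ m * y}.ncard) (hm : 0 ≤ m) :
    ∃ A' L' e', A'.card = A.card ∧ IsGreedyStage P ε m A' L' e' ∧
      entropyConst A.card (Fintype.card ι) * greedyPotential A L e ≤
        m ^ Fintype.card ι * greedyPotential A' L' e' := by
  classical
  obtain ⟨q, hq, hmin⟩ := A.exists_min_image e hA
  obtain ⟨x, hqx, hcard⟩ := hcov (e q) (S.one_le_frontier q)
  obtain ⟨r, ⟨w, t, hx, hw⟩, hrx⟩ := exists_mem_lt_of_card_le_ncard hcard hq hqx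
    fun i hi => (S.frontier_le i hi q hq).trans_lt hqx
  obtain ⟨o, ho, hr, hor⟩ : ∃ o ∈ A, r ∉ A.erase o ∧ (o ≠ r → o = q) := by
    by_cases hrA : r ∈ A
    · exact ⟨r, hrA, Finset.notMem_erase r A, fun h => absurd rfl h⟩
    · exact ⟨q, hq, fun h => hrA (Finset.mem_of_mem_erase h), fun _ => rfl⟩
  have ht : 0 < t := (S.frontier_pos r).trans (hrx.trans_le ((hP r).le_turn hx))
  have hgain := entropyConst_mul_le_of_load_le A.card (Fintype.card ι) (S.load_pos r).le ht.le
    (S.load_add_le hx hrx) (hw.trans (mul_le_mul_of_nonneg_left (hmin o ho) hm))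
  refine ⟨insert r (A.erase o), Function.update L r (ε + w), Function.update e r t, ?_,
    S.update hP hm hq hmin hor hx hqx.le hrx hw, ?_⟩
  · rw [Finset.card_insert_of_notMem hr, Finset.card_erase_add_one ho]
  · have hpot := greedyPotential_update_mul (l := ε + w) (S.load_pos r).ne' ht.ne'
      (fun j _ => (S.frontier_pos j).ne') ho hr
    have hLt : 0 < L r ^ A.card * t ^ Fintype.card ι :=
      mul_pos (pow_pos (S.load_pos r) _) (pow_pos ht _)
    refine le_of_mul_le_mul_right ?_ hLt
    rw [mul_assoc, mul_assoc, hpot, mul_left_comm, mul_left_comm (m ^ _)]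
    exact mul_le_mul_of_nonneg_left hgain S.potential_pos.le

end IsGreedyStage

section Covering

variable {ι : Type*} [Fintype ι] {P : ι → ℝ → ℝ → ℝ → Prop} {s : ℕ}

lemma entropyConst_le_pow_of_growing_covering (hP : ∀ r, IsExcursionCost (P r)) (hs : 0 < s)
    {ε m : ℝ} (hε : 0 < ε) (hεm : ε ≤ m)
    (hcov : ∀ y, 1 ≤ y → ∃ x > y, s ≤ {r | ∃ w t, P r x w t ∧ ε + w ≤ m * y}.ncard) :
    entropyConst s (Fintype.card ι) ≤ m ^ Fintype.card ι := by
  have hm : 0 ≤ m := hε.le.trans hεm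
  have hs_card : s ≤ Fintype.card ι := by
    obtain ⟨x, -, hx⟩ := hcov 1 le_rfl
    exact hx.trans ((Set.ncard_le_card _).trans_eq Nat.card_eq_fintype_card)
  let V : Set ℝ :=
    {v | ∃ A L e, A.card = s ∧ IsGreedyStage P ε m A L e ∧ v = greedyPotential A L e}
  have hne : V.Nonempty := by
    obtain ⟨A, -, hA⟩ := Finset.exists_subset_card_eq (s := (Finset.univ : Finset ι))
      (hs_card.trans_eq Finset.card_univ.symm)
    exact ⟨_, A, _, _, hA, .const hP hε hεm A, rfl⟩
  have hbdd : BddAbove V := by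
    refine ⟨(m ^ s) ^ Fintype.card ι, ?_⟩
    rintro _ ⟨A, L, e, rfl, S, rfl⟩
    exact S.potential_le
  refine le_of_forall_exists_mul_le hne hbdd ?_ (entropyConst_pos _ _) (pow_nonneg hm _) ?_
  · rintro _ ⟨A, L, e, -, S, rfl⟩
    exact S.potential_pos
  · rintro _ ⟨A, L, e, rfl, S, rfl⟩
    obtain ⟨A', L', e', hA', S', hgrow⟩ :=
      S.exists_potential_growth hP (Finset.card_pos.1 hs) hcov hm
    exact ⟨_, ⟨A', L', e', hA', S', rfl⟩, hgrow⟩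

theorem entropyConst_le_pow_of_covering (hP : ∀ r, IsExcursionCost (P r)) (hs : 0 < s) {μ : ℝ}
    (hcov : ∀ x, 1 ≤ x → s ≤ {r | ∃ w t, P r x w t ∧ w ≤ μ * x}.ncard) :
    entropyConst s (Fintype.card ι) ≤ μ ^ Fintype.card ι := by
  have hμ : 1 ≤ μ := by
    obtain ⟨r, w, t, hx, hw⟩ := Set.nonempty_of_ncard_ne_zero (hs.trans_le (hcov 1 le_rfl)).ne'
    linarith [(hP r).le_turn hx, (hP r).turn_le hx]
  have happrox : ∀ ε > 0,
      entropyConst s (Fintype.card ι) ≤ ((μ + ε) * (1 + ε)) ^ Fintype.card ι := by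
    intro ε hε
    refine entropyConst_le_pow_of_growing_covering hP hs hε (by nlinarith) fun y hy => ?_
    have hlt : y < (1 + ε) * y := by nlinarith
    refine ⟨(1 + ε) * y, hlt, (hcov _ (hy.trans hlt.le)).trans (Set.ncard_le_ncard ?_)⟩
    rintro r ⟨w, t, hx, hw⟩
    refine ⟨w, t, hx, ?_⟩
    calc ε + w ≤ ε * ((1 + ε) * y) + μ * ((1 + ε) * y) :=
          add_le_add (le_mul_of_one_le_right hε.le (hy.trans hlt.le)) hw
      _ = (μ + ε) * (1 + ε) * y := by ring
  have hlim : Filter.Tendsto (fun ε : ℝ => ((μ + ε) * (1 + ε)) ^ Fintype.card ι)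
      (nhdsWithin 0 (Set.Ioi 0)) (nhds (μ ^ Fintype.card ι)) := by
    have hcont : Continuous fun ε : ℝ => ((μ + ε) * (1 + ε)) ^ Fintype.card ι := by fun_prop
    simpa using (hcont.tendsto 0).mono_left nhdsWithin_le_nhds
  exact ge_of_tendsto hlim (Filter.eventually_of_mem self_mem_nhdsWithin happrox)

end Covering

/-- The trajectory `h` visits the point `x` within time `T`. -/
def VisitsWithin (h : ℝ≥0 → ℝ) (T x : ℝ) : Prop :=
  ∃ u : ℝ≥0, (u : ℝ) ≤ T ∧ h u = x

/-- At time `τ` the trajectory `h` is at distance `x` from the origin, after having been at its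
largest distance `t` so far on the opposite side: `|h τ - h u| = x + t` says that `h τ` and `h u`
have opposite signs. -/
structure IsSweep (h : ℝ≥0 → ℝ) (τ : ℝ≥0) (x t : ℝ) : Prop where
  abs_eq : |h τ| = x
  abs_le : ∀ u ≤ τ, |h u| ≤ t
  exists_turn : ∃ u ≤ τ, |h u| = t ∧ |h τ - h u| = x + t

/-- The trajectory `h` completes a sweep of `±x` with farthest point `t` at a time `τ` for which
`w = (τ - x) / 2`. A zigzag with turning distances `t₁, …, tₙ = t` has `w = t₁ + ⋯ + tₙ`. -/
def SweepsAtCost (h : ℝ≥0 → ℝ) (x w t : ℝ) : Prop :=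
  ∃ τ : ℝ≥0, IsSweep h τ x t ∧ w = (τ - x) / 2

section Trajectories

variable {h : ℝ≥0 → ℝ} {x y t t' T : ℝ} {τ τ' : ℝ≥0}

lemma abs_sub_le_sub_of_lipschitzWith_one (hl : LipschitzWith 1 h) {u v : ℝ≥0} (huv : u ≤ v) :
    |h v - h u| ≤ v - u := by
  have huv' : (u : ℝ) ≤ v := mod_cast huv
  simpa [Real.dist_eq, NNReal.dist_eq, abs_of_nonneg (sub_nonneg.2 huv')] using hl.dist_le_mul v u

lemma IsSweep.of_neg (H : IsSweep (-h) τ x t) : IsSweep h τ x t where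
  abs_eq := by simpa using H.abs_eq
  abs_le := by simpa using H.abs_le
  exists_turn := by
    obtain ⟨u, hu, hut, hsep⟩ := H.exists_turn
    refine ⟨u, hu, by simpa using hut, ?_⟩
    rwa [Pi.neg_apply, Pi.neg_apply, neg_sub_neg, abs_sub_comm] at hsep

lemma IsSweep.le (H : IsSweep h τ x t) : x ≤ t :=
  H.abs_eq ▸ H.abs_le τ le_rfl

lemma IsSweep.add_two_mul_le (H : IsSweep h τ x t) (hl : LipschitzWith 1 h) (h0 : h 0 = 0) :
    x + 2 * t ≤ τ := by
  obtain ⟨u, hu, hut, hsep⟩ := H.exists_turn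
  have hout : t ≤ u := by
    simpa [h0, hut] using abs_sub_le_sub_of_lipschitzWith_one hl (zero_le : 0 ≤ u)
  have hback : x + t ≤ τ - u := hsep ▸ abs_sub_le_sub_of_lipschitzWith_one hl hu
  linarith

lemma IsSweep.add_two_mul_le_of_lt (H : IsSweep h τ x t) (H' : IsSweep h τ' y t')
    (hl : LipschitzWith 1 h) (hty : t < y) : τ - x + 2 * t' ≤ τ' - y := by
  obtain ⟨u, hu, hut, hsep⟩ := H'.exists_turn
  have hτu : τ ≤ u := by
    by_contra! huτ
    linarith [H.abs_le u huτ.le, H'.le]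
  have hout : t' - x ≤ u - τ := by
    rw [← hut, ← H.abs_eq]
    exact (abs_sub_abs_le_abs_sub _ _).trans (abs_sub_le_sub_of_lipschitzWith_one hl hτu)
  have hback : y + t' ≤ τ' - u := hsep ▸ abs_sub_le_sub_of_lipschitzWith_one hl hu
  linarith

lemma isExcursionCost_sweepsAtCost (hl : LipschitzWith 1 h) (h0 : h 0 = 0) :
    IsExcursionCost (SweepsAtCost h) where
  le_turn := fun ⟨_, H, _⟩ => H.le
  turn_le := by
    rintro x w t ⟨τ, H, rfl⟩
    linarith [H.add_two_mul_le hl h0]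
  add_turn_le := by
    rintro x w t y w' t' ⟨τ, H, rfl⟩ ⟨τ', H', rfl⟩ hty
    linarith [H.add_two_mul_le_of_lt H' hl hty]

lemma le_of_le_first_visit (hc : Continuous h) (hx : h 0 ≤ x) (hτ : IsLeast {u | h u = x} τ)
    {u : ℝ≥0} (hu : u ≤ τ) : h u ≤ x := by
  by_contra! hxu
  obtain ⟨v, hv, hvx⟩ := intermediate_value_Icc (zero_le : 0 ≤ u) hc.continuousOn ⟨hx, hxu.le⟩
  obtain rfl : v = u := le_antisymm hv.2 (hu.trans (hτ.2 hvx))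
  exact hxu.ne' hvx

lemma exists_isSweep_of_first_visit (hc : Continuous h) (h0 : h 0 = 0) (hx : 0 ≤ x)
    (hτ : IsLeast {u | h u = x} τ) {b : ℝ≥0} (hb : h b = -x) (hbτ : b ≤ τ) :
    ∃ t, IsSweep h τ x t := by
  obtain ⟨u, hu, hmin⟩ := (isCompact_Icc (a := (0 : ℝ≥0)) (b := τ)).exists_isMinOn
    ⟨b, zero_le, hbτ⟩ hc.continuousOn
  have hτx : h τ = x := hτ.1
  have hux : x ≤ -h u := by
    have hub : h u ≤ h b := hmin ⟨zero_le, hbτ⟩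
    linarith
  refine ⟨-h u, by rw [hτx, abs_of_nonneg hx], fun v hv => ?_, u, hu.2, ?_, ?_⟩
  · have huv : h u ≤ h v := hmin ⟨zero_le, hv⟩
    exact abs_le.2 ⟨by linarith,
      (le_of_le_first_visit hc (h0.trans_le hx) hτ hv).trans hux⟩
  · exact abs_of_nonpos (by linarith)
  · rw [hτx, ← sub_eq_add_neg, abs_of_nonneg (by linarith)]

lemma exists_isSweep (hc : Continuous h) (h0 : h 0 = 0) (hx : 0 ≤ x)
    (hpos : VisitsWithin h T x) (hneg : VisitsWithin h T (-x)) :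
    ∃ (τ : ℝ≥0) (t : ℝ), (τ : ℝ) ≤ T ∧ IsSweep h τ x t := by
  have exists_first_visit {z : ℝ} (hz : VisitsWithin h T z) :
      ∃ a : ℝ≥0, (a : ℝ) ≤ T ∧ IsLeast {u | h u = z} a := by
    obtain ⟨u, huT, hu⟩ := hz
    have hleast := (isClosed_eq hc continuous_const).isLeast_csInf ⟨u, hu⟩ (OrderBot.bddBelow _)
    exact ⟨_, le_trans (mod_cast hleast.2 hu) huT, hleast⟩
  obtain ⟨a, haT, ha⟩ := exists_first_visit hpos
  obtain ⟨b, hbT, hb⟩ := exists_first_visit hneg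
  rcases le_total b a with hba | hab
  · obtain ⟨t, H⟩ := exists_isSweep_of_first_visit hc h0 hx ha hb.1 hba
    exact ⟨a, t, haT, H⟩
  · have hb' : IsLeast {u | (-h) u = x} b := by simpa [neg_eq_iff_eq_neg] using hb
    have ha' : (-h) a = -x := congrArg Neg.neg ha.1
    obtain ⟨t, H⟩ := exists_isSweep_of_first_visit hc.neg (by simp [h0]) hx hb' ha' hab
    exact ⟨b, t, hbT, H.of_neg⟩

lemma exists_sweepsAtCost {lam : ℝ} (hc : Continuous h) (h0 : h 0 = 0) (hx : 0 ≤ x)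
    (hpos : VisitsWithin h (lam * x) x) (hneg : VisitsWithin h (lam * x) (-x)) :
    ∃ w t, SweepsAtCost h x w t ∧ w ≤ (lam - 1) / 2 * x := by
  obtain ⟨τ, t, hτ, H⟩ := exists_isSweep hc h0 hx hpos hneg
  exact ⟨_, t, ⟨τ, H, rfl⟩, by linarith⟩

end Trajectories

lemma le_ncard_sweepsAtCost {ι : Type*} [Finite ι] {g : ι → ℝ≥0 → ℝ} {lam x : ℝ} {s n : ℕ}
    (hc : ∀ r, Continuous (g r)) (h0 : ∀ r, g r 0 = 0) (hx : 0 ≤ x) (hs : s + Nat.card ι ≤ 2 * n)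
    (hpos : n ≤ {r | VisitsWithin (g r) (lam * x) x}.ncard)
    (hneg : n ≤ {r | VisitsWithin (g r) (lam * x) (-x)}.ncard) :
    s ≤ {r | ∃ w t, SweepsAtCost (g r) x w t ∧ w ≤ (lam - 1) / 2 * x}.ncard := by
  have hboth : s ≤ ({r | VisitsWithin (g r) (lam * x) x} ∩
      {r | VisitsWithin (g r) (lam * x) (-x)}).ncard := by
    have := ncard_add_ncard_le_card_add_ncard_inter
      {r | VisitsWithin (g r) (lam * x) x} {r | VisitsWithin (g r) (lam * x) (-x)}
    omega
  exact hboth.trans (Set.ncard_le_ncard fun r hr =>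
    exists_sweepsAtCost (hc r) (h0 r) hx hr.1 hr.2)

/-- Lower bound for parallel search on the line with `k` robots, `f` of which are
faulty of crash type.  Robots are 1-Lipschitz trajectories starting at 0; every
point `x` with `|x| ≥ 1` must be visited by at least `f+1` robots within time
`λ|x|`.  Then `λ ≥ 2 ρ^ρ/(ρ-1)^(ρ-1) + 1` where `ρ = 2(f+1)/k`. -/
theorem line_search_crash_lower_bound
    (k f : ℕ) (hks : k < 2 * (f + 1)) (hsk : f + 1 ≤ k)
    (lam : ℝ) (hlam : 1 ≤ lam)
    (g : Fin k → ℝ≥0 → ℝ)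
    (hlip : ∀ r, LipschitzWith 1 (g r))
    (h0 : ∀ r, g r 0 = 0)
    (hcov : ∀ x : ℝ, 1 ≤ |x| →
      f + 1 ≤ {r : Fin k | ∃ t : ℝ≥0, (t : ℝ) ≤ lam * |x| ∧ g r t = x}.ncard)
    (ρ : ℝ) (hρ : ρ = 2 * (f + 1) / k) :
    2 * ρ ^ ρ / (ρ - 1) ^ (ρ - 1) + 1 ≤ lam := by
  obtain ⟨s, hs⟩ : ∃ s, s + k = 2 * (f + 1) := ⟨2 * (f + 1) - k, by omega⟩
  have hsweeps : ∀ x : ℝ, 1 ≤ x →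
      s ≤ {r | ∃ w t, SweepsAtCost (g r) x w t ∧ w ≤ (lam - 1) / 2 * x}.ncard := by
    intro x hx
    have hx0 : 0 ≤ x := by linarith
    refine le_ncard_sweepsAtCost (fun r => (hlip r).continuous) h0 hx0 (by simpa using hs.le) ?_ ?_
    · simpa only [VisitsWithin, abs_of_nonneg hx0] using hcov x (hx.trans (le_abs_self x))
    · simpa only [VisitsWithin, abs_neg, abs_of_nonneg hx0] using
        hcov (-x) (by rwa [abs_neg, abs_of_nonneg hx0])
  have hpow : (ρ ^ ρ / (ρ - 1) ^ (ρ - 1)) ^ k ≤ ((lam - 1) / 2) ^ k := by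
    rw [rpow_self_div_rpow_self_pow_eq_entropyConst (s := s) (by omega)
      (hρ.trans (by congr 1; exact_mod_cast hs.symm))]
    simpa using entropyConst_le_pow_of_covering
      (fun r => isExcursionCost_sweepsAtCost (hlip r) (h0 r)) (by omega) hsweeps
  have hroot : ρ ^ ρ / (ρ - 1) ^ (ρ - 1) ≤ (lam - 1) / 2 :=
    le_of_pow_le_pow_left₀ (by omega) (by linarith) hpow
  rw [mul_div_assoc]
  linarith
end

section
/- Let k and f be natural numbers with 0 < 2(f+1) - k ≤ k, and set ρ := 2(f+1)/k. Then the infimum of the set of real numbers λ ≥ 1 for which there exist 1-Lipschitz functions g_1, …, g_k : ℝ_{≥0} → ℝ with g_r(0) = 0 such that every real x with |x| ≥ 1 satisfies g_r(t) = x for some t ∈ [0, λ|x|] for at least f+1 indices r, equals 2·ρ^ρ/(ρ-1)^{ρ-1} + 1. -/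
open scoped NNReal

/-!
Write `q = f + 1`, `s = 2 * q - k` and `ρ = 2 * q / k = 1 + s / k`. At least `s` robots visit both
`x` and `-x` in time, and such a robot has, before reaching the later of the two points, turned at
a distance `y ≥ |x|` on the other side. One of them is not among the `s - 1` robots that have
reached farthest so far, and its excursion extends the search history. Along these extensions the
product of the `s` largest reaches, divided by the product of all travelled lengths to the power
`ρ - 1`, changes by a factor which by AM-GM is at most
`((λ - 1) / 2) / (ρ ^ ρ / (ρ - 1) ^ (ρ - 1))`, up to an arbitrarily small slack. As this quotient
stays bounded away from `0`, the factor cannot be smaller than `1`.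

Conversely the bound is attained by robots alternating between the half lines with turning points
growing by the factor `ρ / (ρ - 1)`, staggered so that the turning points of all the robots
together form a geometric progression on each half line.
-/

/-- The trajectory `g` is at the point `x` at some time `t ≤ T`. -/
def Visits (g : ℝ≥0 → ℝ) (T x : ℝ) : Prop :=
  ∃ t : ℝ≥0, (t : ℝ) ≤ T ∧ g t = x

/-- A search of the line by robots `g r` of speed at most `1`, starting at the origin, in which
every `x` with `1 ≤ |x|` is visited by at least `q` robots within time `lam * |x|`. Against `f`
crash faults one needs `q = f + 1`. -/
structure IsSearchStrategy {ι : Type*} (q : ℕ) (lam : ℝ) (g : ι → ℝ≥0 → ℝ) : Prop where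
  lipschitz : ∀ r, LipschitzWith 1 (g r)
  map_zero : ∀ r, g r 0 = 0
  le_ncard_visits : ∀ x : ℝ, 1 ≤ |x| → q ≤ {r | Visits (g r) (lam * |x|) x}.ncard

theorem exists_first_eq_of_continuousOn {α δ : Type*} [ConditionallyCompleteLinearOrder α]
    [TopologicalSpace α] [OrderTopology α] [DenselyOrdered α] [LinearOrder δ] [TopologicalSpace δ]
    [OrderClosedTopology δ] {f : α → δ} {a b : α} (hab : a ≤ b)
    (hf : ContinuousOn f (Set.Icc a b)) (hfab : f a ≤ f b) :
    ∃ t ∈ Set.Icc a b, f t = f b ∧ ∀ u ∈ Set.Ico a t, f u < f b := by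
  have hcompact : IsCompact (Set.Icc a b ∩ f ⁻¹' {f b}) :=
    isCompact_Icc.of_isClosed_subset (hf.preimage_isClosed_of_isClosed isClosed_Icc
      isClosed_singleton) Set.inter_subset_left
  obtain ⟨t, ⟨ht, hft⟩, hleast⟩ := hcompact.exists_isLeast ⟨b, ⟨hab, le_rfl⟩, rfl⟩
  refine ⟨t, ht, hft, fun u ⟨hau, hut⟩ => ?_⟩
  by_contra! hge
  have hub : u ≤ b := hut.le.trans ht.2
  obtain ⟨v, ⟨hav, hvu⟩, hfv⟩ :=
    intermediate_value_Icc hau (hf.mono (Set.Icc_subset_Icc_right hub)) ⟨hfab, hge⟩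
  exact (hvu.trans_lt hut).not_ge (hleast ⟨⟨hav, hvu.trans hub⟩, hfv⟩)

/-- Up to some time `τ` the robot stays in `[-h, h]`, although `τ` would have allowed it to travel
`2 * S` more than its distance `|g τ|` from the origin: `S` measures the time spent on earlier
excursions. -/
def IsConfined (g : ℝ≥0 → ℝ) (h S : ℝ) : Prop :=
  ∃ τ : ℝ≥0, 2 * S + |g τ| ≤ τ ∧ ∀ t ≤ τ, |g t| ≤ h

theorem isConfined_neg_iff {g : ℝ≥0 → ℝ} {h S : ℝ} : IsConfined (-g) h S ↔ IsConfined g h S := by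
  simp only [IsConfined, Pi.neg_apply, abs_neg]

theorem isConfined_zero {g : ℝ≥0 → ℝ} {h : ℝ} (h₀ : g 0 = 0) (hh : 0 ≤ h) : IsConfined g h 0 :=
  ⟨0, by simp [h₀], fun t ht => by simpa [nonpos_iff_eq_zero.mp ht, h₀] using hh⟩

theorem abs_sub_le_sub_of_lipschitzWith_one_s1 {g : ℝ≥0 → ℝ} (hg : LipschitzWith 1 g) {s t : ℝ≥0}
    (hst : s ≤ t) : |g t - g s| ≤ t - s := by
  have hdist := hg.dist_le_mul t s
  rwa [NNReal.coe_one, one_mul, Real.dist_eq, NNReal.dist_eq,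
    abs_of_nonneg (sub_nonneg.mpr (NNReal.coe_le_coe.mpr hst))] at hdist

/-- Visiting `-x` before the first visit to `x` costs a turn at some `-y ≤ -x`. -/
theorem IsConfined.exists_turn {g : ℝ≥0 → ℝ} (hg : LipschitzWith 1 g) {h S x : ℝ}
    (hconf : IsConfined g h S) (hhx : h < x) {s t : ℝ≥0} (hst : s ≤ t) (hs : g s = -x)
    (ht : g t = x) (hfirst : ∀ u < t, g u < x) :
    ∃ y, x ≤ y ∧ IsConfined g y (S + y) ∧ 2 * (S + y) + x ≤ t := by
  obtain ⟨τ, hτ, hτh⟩ := hconf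
  obtain ⟨w, ⟨-, hwt⟩, hmin⟩ := isCompact_Icc.exists_isMinOn ⟨s, zero_le, hst⟩
    (hg.continuous.continuousOn (s := Set.Icc 0 t))
  have hgw : ∀ u ≤ t, g w ≤ g u := fun u hu => hmin ⟨zero_le, hu⟩
  have hxw : g w ≤ -x := hs ▸ hgw s hst
  have hτw : τ ≤ w := by
    by_contra! hwτ
    linarith [neg_abs_le (g w), hτh w hwτ.le]
  have hx : 0 < x := (abs_nonneg _).trans_lt ((hτh τ le_rfl).trans_lt hhx)
  have houtward := (abs_le.mp (abs_sub_le_sub_of_lipschitzWith_one_s1 hg hτw)).1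
  have hreturn := (abs_le.mp (abs_sub_le_sub_of_lipschitzWith_one_s1 hg hwt)).2
  have htime : 2 * (S + -g w) + x ≤ t := by linarith [neg_abs_le (g τ)]
  refine ⟨-g w, by linarith,
    ⟨t, by rwa [ht, abs_of_pos hx], fun u hu => abs_le.mpr ⟨?_, ?_⟩⟩, htime⟩
  · linarith [hgw u hu]
  · obtain rfl | hut := hu.eq_or_lt
    · linarith
    · linarith [hfirst u hut]

theorem Visits.exists_first {g : ℝ≥0 → ℝ} (hg : LipschitzWith 1 g) (h₀ : g 0 = 0) {T x : ℝ}
    (hx : 0 ≤ x) (hvisit : Visits g T x) :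
    ∃ t : ℝ≥0, (t : ℝ) ≤ T ∧ g t = x ∧ ∀ u < t, g u < x := by
  obtain ⟨b, hbT, rfl⟩ := hvisit
  obtain ⟨t, ⟨-, htb⟩, hgt, hfirst⟩ := exists_first_eq_of_continuousOn (zero_le (a := b))
    hg.continuous.continuousOn (h₀.trans_le hx)
  exact ⟨t, (NNReal.coe_le_coe.mpr htb).trans hbT, hgt, fun u hu => hfirst u ⟨zero_le, hu⟩⟩

theorem IsConfined.exists_turn_of_visits {g : ℝ≥0 → ℝ} (hg : LipschitzWith 1 g) (h₀ : g 0 = 0)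
    {h S T x : ℝ} (hconf : IsConfined g h S) (hhx : h < x) (hpos : Visits g T x)
    (hneg : Visits g T (-x)) : ∃ y, x ≤ y ∧ IsConfined g y (S + y) ∧ 2 * (S + y) + x ≤ T := by
  have hx : 0 ≤ x := by
    obtain ⟨τ, -, hτh⟩ := hconf
    exact ((abs_nonneg _).trans (hτh τ le_rfl)).trans hhx.le
  have hneg' : Visits (-g) T x := hneg.imp fun t ht => ⟨ht.1, by simp [ht.2]⟩
  obtain ⟨a, haT, hga, hfirst_a⟩ := hpos.exists_first hg h₀ hx
  obtain ⟨b, hbT, hgb, hfirst_b⟩ := hneg'.exists_first hg.neg (by simp [h₀]) hx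
  obtain hba | hab := le_total b a
  · obtain ⟨y, hxy, hy, hya⟩ :=
      hconf.exists_turn hg hhx hba (neg_eq_iff_eq_neg.mp hgb) hga hfirst_a
    exact ⟨y, hxy, hy, hya.trans haT⟩
  · obtain ⟨y, hxy, hy, hyb⟩ :=
      (isConfined_neg_iff.mpr hconf).exists_turn hg.neg hhx hab (by simp [hga]) hgb hfirst_b
    exact ⟨y, hxy, isConfined_neg_iff.mp hy, hyb.trans hbT⟩

theorem exists_lipschitzWith_one_through {α ι : Type*} [PseudoMetricSpace α] [Nonempty ι]
    {T : ι → α} {p : ι → ℝ} (hTp : ∀ i j, dist (p i) (p j) ≤ dist (T i) (T j)) :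
    ∃ g : α → ℝ, LipschitzWith 1 g ∧ ∀ i, g (T i) = p i := by
  have hinv : ∀ i, T (Function.invFun T (T i)) = T i := fun i => Function.invFun_eq ⟨i, rfl⟩
  have hlip : LipschitzOnWith 1 (fun t => p (Function.invFun T t)) (Set.range T) := by
    refine LipschitzOnWith.of_dist_le_mul ?_
    rintro _ ⟨i, rfl⟩ _ ⟨j, rfl⟩
    simpa only [hinv, NNReal.coe_one, one_mul] using
      hTp (Function.invFun T (T i)) (Function.invFun T (T j))
  obtain ⟨g, hg, hgp⟩ := hlip.extend_real
  refine ⟨g, hg, fun i => ?_⟩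
  rw [← hgp ⟨i, rfl⟩, ← dist_le_zero]
  simpa only [hinv, dist_self] using hTp (Function.invFun T (T i)) i

theorem map_add_dist_eq_of_mem_uIcc {g : ℝ → ℝ} (hg : LipschitzWith 1 g) {a b z : ℝ}
    (hab : dist (g a) (g b) = b - a) (hz : z ∈ Set.uIcc (g a) (g b)) :
    g (a + dist (g a) z) = z := by
  have hsplit : dist (g a) z + dist z (g b) = b - a :=
    hab ▸ dist_add_dist_of_mem_segment (segment_eq_uIcc (g a) (g b) ▸ hz)
  have hleft : dist (g (a + dist (g a) z)) (g a) ≤ dist (g a) z := by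
    simpa using hg.dist_le_mul (a + dist (g a) z) a
  have hright : dist (g (a + dist (g a) z)) (g b) ≤ dist z (g b) := by
    have hle := hg.dist_le_mul (a + dist (g a) z) b
    rwa [NNReal.coe_one, one_mul, Real.dist_eq _ b, abs_sub_comm,
      show b - (a + dist (g a) z) = dist z (g b) by linarith, abs_of_nonneg dist_nonneg] at hle
  simp only [Real.dist_eq] at *
  grind

/-- The length of the path through the points `p 0, …, p n` in this order. -/
def pathLength (p : ℕ → ℝ) (n : ℕ) : ℝ :=
  ∑ i ∈ Finset.range n, dist (p i) (p (i + 1))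

theorem dist_le_dist_pathLength (p : ℕ → ℝ) (m n : ℕ) :
    dist (p m) (p n) ≤ dist (pathLength p m) (pathLength p n) := by
  wlog hmn : m ≤ n generalizing m n
  · simpa only [dist_comm] using this n m (le_of_not_ge hmn)
  calc dist (p m) (p n) ≤ ∑ i ∈ Finset.Ico m n, dist (p i) (p (i + 1)) :=
        dist_le_Ico_sum_dist p hmn
    _ = pathLength p n - pathLength p m := Finset.sum_Ico_eq_sub _ hmn
    _ ≤ dist (pathLength p m) (pathLength p n) := by
        rw [dist_comm]
        exact le_abs_self _

theorem exists_lipschitzWith_one_path (p : ℕ → ℝ) :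
    ∃ g : ℝ → ℝ, LipschitzWith 1 g ∧ g 0 = p 0 ∧
      ∀ n, ∀ z ∈ Set.uIcc (p n) (p (n + 1)), g (pathLength p n + dist (p n) z) = z := by
  obtain ⟨g, hg, hgp⟩ := exists_lipschitzWith_one_through (dist_le_dist_pathLength p)
  refine ⟨g, hg, by simpa [pathLength] using hgp 0, fun n z hz => ?_⟩
  rw [← hgp n]
  apply map_add_dist_eq_of_mem_uIcc hg (b := pathLength p (n + 1))
  · rw [hgp, hgp, pathLength, Finset.sum_range_succ, ← pathLength, add_sub_cancel_left]
  · rwa [hgp, hgp]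

/-- The turning points `-b 0, b 1, -b 2, b 3, …` of a search alternating between the two half
lines; it starts at the origin if `b 0 = 0`. -/
def zigzag (b : ℕ → ℝ) (n : ℕ) : ℝ :=
  -((-1) ^ n * b n)

theorem zigzag_succ (b : ℕ → ℝ) (n : ℕ) : zigzag b (n + 1) = (-1) ^ n * b (n + 1) := by
  rw [zigzag, pow_succ]
  ring

theorem dist_zigzag {b : ℕ → ℝ} {n : ℕ} {x : ℝ} (hx : 0 ≤ b n + x) :
    dist (zigzag b n) ((-1) ^ n * x) = b n + x := by
  rw [zigzag, Real.dist_eq, ← neg_add', abs_neg, ← mul_add, abs_mul, abs_neg_one_pow, one_mul,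
    abs_of_nonneg hx]

theorem mem_uIcc_zigzag {b : ℕ → ℝ} {n : ℕ} {x : ℝ} (hlower : -b n ≤ x) (hupper : x ≤ b (n + 1)) :
    (-1) ^ n * x ∈ Set.uIcc (zigzag b n) (zigzag b (n + 1)) := by
  rw [zigzag_succ, zigzag, Set.mem_uIcc]
  obtain hsign | hsign := neg_one_pow_eq_or ℝ n <;> rw [hsign]
  · exact .inl ⟨by linarith, by linarith⟩
  · exact .inr ⟨by linarith, by linarith⟩

theorem pathLength_zigzag_add {b : ℕ → ℝ} (hb₀ : b 0 = 0) (hb : ∀ n, 0 ≤ b n) (n : ℕ) :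
    pathLength (zigzag b) n + b n = 2 * ∑ i ∈ Finset.range (n + 1), b i := by
  induction n with
  | zero => simp [pathLength, hb₀]
  | succ n ih =>
    rw [Finset.sum_range_succ, mul_add, ← ih, pathLength, Finset.sum_range_succ, ← pathLength,
      zigzag_succ, dist_zigzag (add_nonneg (hb n) (hb (n + 1)))]
    ring

theorem exists_zigzag_trajectory {a : ℕ → ℝ} (ha : ∀ n, 0 ≤ a n) :
    ∃ g : ℝ≥0 → ℝ, LipschitzWith 1 g ∧ g 0 = 0 ∧ ∀ n x, 0 ≤ x → x ≤ a n →
      Visits g (2 * ∑ i ∈ Finset.range n, a i + x) ((-1) ^ n * x) := by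
  obtain ⟨b, hb₀, hba⟩ : ∃ b : ℕ → ℝ, b 0 = 0 ∧ ∀ n, b (n + 1) = a n :=
    ⟨fun n => n.casesOn 0 a, rfl, fun _ => rfl⟩
  have hb : ∀ n, 0 ≤ b n := by
    rintro (_ | n)
    · exact hb₀.ge
    · exact (ha n).trans_eq (hba n).symm
  obtain ⟨g, hg, hg₀, hgb⟩ := exists_lipschitzWith_one_path (zigzag b)
  refine ⟨fun t => g t, one_mul (1 : ℝ≥0) ▸ hg.comp NNReal.isometry_coe.lipschitz,
    by simp [hg₀, zigzag, hb₀], fun n x hx hxa => ?_⟩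
  have htime : pathLength (zigzag b) n + dist (zigzag b n) ((-1) ^ n * x) =
      2 * ∑ i ∈ Finset.range n, a i + x := by
    rw [dist_zigzag (add_nonneg (hb n) hx), ← add_assoc, pathLength_zigzag_add hb₀ hb,
      Finset.sum_range_succ', hb₀, add_zero]
    simp only [hba]
  have hvisit := hgb n _ (mem_uIcc_zigzag (by linarith [hb n]) (hxa.trans_eq (hba n).symm))
  rw [htime] at hvisit
  have hsum : 0 ≤ ∑ i ∈ Finset.range n, a i := Finset.sum_nonneg fun i _ => ha i
  exact ⟨⟨2 * ∑ i ∈ Finset.range n, a i + x, by positivity⟩, le_rfl, hvisit⟩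

theorem geom_sum_le_pow_div {β : ℝ} (hβ : 1 < β) (n : ℕ) :
    ∑ i ∈ Finset.range n, β ^ i ≤ β ^ n / (β - 1) := by
  rw [geom_sum_eq hβ.ne']
  exact div_le_div_of_nonneg_right (sub_le_self _ zero_le_one) (sub_pos.mpr hβ).le

theorem Visits.mono {g : ℝ≥0 → ℝ} {T T' x : ℝ} (hTT' : T ≤ T') (hvisit : Visits g T x) :
    Visits g T' x :=
  hvisit.imp fun _ ht => ⟨ht.1.trans hTT', ht.2⟩

theorem exists_geometric_trajectory {c β : ℝ} (hc : 0 ≤ c) (hβ : 1 < β) :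
    ∃ g : ℝ≥0 → ℝ, LipschitzWith 1 g ∧ g 0 = 0 ∧ ∀ n x, 0 ≤ x → x ≤ c * β ^ n →
      Visits g (2 * (c * β ^ n / (β - 1)) + x) ((-1) ^ n * x) := by
  have hβ₀ : 0 ≤ β := zero_le_one.trans hβ.le
  obtain ⟨g, hg, hg₀, hvisit⟩ := exists_zigzag_trajectory (a := fun i => c * β ^ i)
    fun i => mul_nonneg hc (pow_nonneg hβ₀ i)
  refine ⟨g, hg, hg₀, fun n x hx hxn => (hvisit n x hx hxn).mono ?_⟩
  rw [← Finset.mul_sum, mul_div_assoc]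
  gcongr
  exact geom_sum_le_pow_div hβ n

theorem pow_mod_mul_pow_div {M : Type*} [Monoid M] {k : ℕ} {β γ : M} (hγβ : γ ^ k = β ^ 2) (m : ℕ) :
    γ ^ (m % k) * β ^ (2 * (m / k)) = γ ^ m := by
  rw [pow_mul, ← hγβ, ← pow_mul, ← pow_add, Nat.mod_add_div]

theorem le_ncard_of_forall_ofNat_mem {k q : ℕ} [NeZero k] (hqk : q ≤ k) {s : Set (Fin k)} {m : ℕ}
    (hs : ∀ i ∈ Finset.Ico m (m + q), Fin.ofNat k i ∈ s) : q ≤ s.ncard := by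
  have hinj : Set.InjOn (Fin.ofNat k) (Finset.Ico m (m + q)) := fun i hi j hj hij =>
    Nat.mod_injOn_Ico m k (Finset.Ico_subset_Ico_right (by omega) hi)
      (Finset.Ico_subset_Ico_right (by omega) hj) (congrArg Fin.val hij)
  simpa using Set.ncard_le_ncard_of_injOn _ hs hinj

theorem exists_le_one_neg_one_pow_mul_abs (x : ℝ) : ∃ p ≤ 1, (-1) ^ p * |x| = x := by
  obtain h | h := abs_choice x
  · exact ⟨0, zero_le_one, by rw [pow_zero, one_mul, h]⟩
  · exact ⟨1, le_rfl, by rw [pow_one, neg_one_mul, h, neg_neg]⟩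

/-- Robot `r` turns at the distances `γ ^ r / β ^ 2 * β ^ i`. As `γ ^ k = β ^ 2`, the turning points
of all robots on one half line together form a geometric progression with ratio `γ`, in which `q`
consecutive points belong to `q` different robots. -/
theorem exists_isSearchStrategy_of_pow_eq_sq {k q : ℕ} (hqk : q ≤ k) {β γ : ℝ} (hβ : 1 < β)
    (hγ : 1 < γ) (hγβ : γ ^ k = β ^ 2) :
    ∃ g : Fin k → ℝ≥0 → ℝ, IsSearchStrategy q (2 * (γ ^ q / (β - 1)) + 1) g := by
  have : NeZero k := ⟨by
    rintro rfl
    exact (one_lt_pow₀ hβ two_ne_zero).ne hγβ⟩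
  have hβ₀ : 0 < β := one_pos.trans hβ
  have hγ₀ : 0 < γ := one_pos.trans hγ
  choose g hg hg₀ hvisit using fun r : Fin k =>
    exists_geometric_trajectory (c := γ ^ (r : ℕ) / β ^ 2) (by positivity) hβ
  refine ⟨g, hg, hg₀, fun x hx => ?_⟩
  obtain ⟨p, hp, hpx⟩ := exists_le_one_neg_one_pow_mul_abs x
  obtain ⟨m, hmx, hxm⟩ : ∃ m, γ ^ m ≤ |x| * β ^ (2 - p) ∧ |x| * β ^ (2 - p) < γ ^ (m + 1) :=
    exists_nat_pow_near (one_le_mul_of_one_le_of_one_le hx (one_le_pow₀ hβ.le)) hγ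
  refine le_ncard_of_forall_ofNat_mem hqk (m := m + 1) fun i hi => ?_
  rw [Finset.mem_Ico] at hi
  have hturn : γ ^ (Fin.ofNat k i : ℕ) / β ^ 2 * β ^ (2 * (i / k) + p) = γ ^ i / β ^ (2 - p) := by
    rw [eq_div_iff (by positivity), div_mul_eq_mul_div, div_mul_eq_mul_div,
      div_eq_iff (by positivity), ← pow_mod_mul_pow_div hγβ i,
      ← pow_sub_mul_pow β (hp.trans one_le_two), pow_add, Fin.val_ofNat]
    ring
  have hle : |x| ≤ γ ^ i / β ^ (2 - p) :=
    (le_div_iff₀ (by positivity)).mpr (hxm.le.trans (pow_le_pow_right₀ hγ.le hi.1))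
  have hge : γ ^ i / β ^ (2 - p) ≤ |x| * γ ^ q := by
    rw [div_le_iff₀ (by positivity)]
    calc γ ^ i ≤ γ ^ (m + q) := pow_le_pow_right₀ hγ.le (by omega)
      _ = γ ^ m * γ ^ q := pow_add γ m q
      _ ≤ |x| * β ^ (2 - p) * γ ^ q := by gcongr
      _ = |x| * γ ^ q * β ^ (2 - p) := by ring
  have hvisit_x := hvisit (Fin.ofNat k i) (2 * (i / k) + p) |x| (abs_nonneg x) (hturn ▸ hle)
  rw [hturn, pow_add, pow_mul, neg_one_sq, one_pow, one_mul, hpx] at hvisit_x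
  refine hvisit_x.mono ?_
  calc 2 * (γ ^ i / β ^ (2 - p) / (β - 1)) + |x| ≤ 2 * (|x| * γ ^ q / (β - 1)) + |x| := by gcongr
    _ = (2 * (γ ^ q / (β - 1)) + 1) * |x| := by ring

/-- The minimum of `β ^ ρ / (β - 1)` over `β > 1`, attained at `β = ρ / (ρ - 1)`: in an
optimal search, a robot that finds `x` in time has made earlier excursions of total length at most
`growthConstant ρ * |x|`. -/
noncomputable def growthConstant (ρ : ℝ) : ℝ :=
  ρ ^ ρ / (ρ - 1) ^ (ρ - 1)

theorem growthConstant_pos {ρ : ℝ} (hρ : 1 < ρ) : 0 < growthConstant ρ :=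
  div_pos (Real.rpow_pos_of_pos (one_pos.trans hρ) _) (Real.rpow_pos_of_pos (sub_pos.mpr hρ) _)

/-- Weighted AM-GM for `ρ * y` and `ρ * L / (ρ - 1)` with the weights `1 / ρ` and `(ρ - 1) / ρ`. -/
theorem mul_rpow_mul_growthConstant_le {ρ y L : ℝ} (hρ : 1 < ρ) (hy : 0 ≤ y) (hL : 0 ≤ L) :
    y * L ^ (ρ - 1) * growthConstant ρ ≤ (y + L) ^ ρ := by
  have hρ₀ : 0 < ρ := one_pos.trans hρ
  have hρ₁ : 0 < ρ - 1 := sub_pos.mpr hρ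
  have hmean : (ρ * y) ^ (1 / ρ) * (ρ * L / (ρ - 1)) ^ ((ρ - 1) / ρ) ≤ y + L := by
    convert Real.geom_mean_le_arith_mean2_weighted (w₁ := 1 / ρ) (w₂ := (ρ - 1) / ρ) (p₁ := ρ * y)
      (p₂ := ρ * L / (ρ - 1)) (by positivity) (by positivity) (by positivity) (by positivity)
      (by field_simp; ring) using 1
    field_simp
  calc y * L ^ (ρ - 1) * growthConstant ρ
      = ρ * y * (ρ * L / (ρ - 1)) ^ (ρ - 1) := by
        rw [growthConstant, Real.div_rpow (by positivity) hρ₁.le, Real.mul_rpow hρ₀.le hL,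
          Real.rpow_sub_one hρ₀.ne' ρ]
        field_simp
    _ = ((ρ * y) ^ (1 / ρ) * (ρ * L / (ρ - 1)) ^ ((ρ - 1) / ρ)) ^ ρ := by
        rw [Real.mul_rpow (by positivity) (by positivity), ← Real.rpow_mul (by positivity),
          ← Real.rpow_mul (by positivity), one_div_mul_cancel hρ₀.ne', Real.rpow_one,
          div_mul_cancel₀ _ hρ₀.ne']
    _ ≤ (y + L) ^ ρ := Real.rpow_le_rpow (by positivity) hmean hρ₀.le

theorem div_mul_rpow_le_div_growthConstant {ρ a m y L : ℝ} (hρ : 1 < ρ) (ha : 0 < a) (hy : 0 ≤ y)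
    (hL : 0 < L) (hyL : L + y ≤ m * a) :
    y / a * (L / (L + y)) ^ (ρ - 1) ≤ m / growthConstant ρ := by
  have hsum : 0 < L + y := by positivity
  rw [le_div_iff₀ (growthConstant_pos hρ), Real.div_rpow hL.le hsum.le, div_mul_div_comm,
    div_mul_eq_mul_div, div_le_iff₀ (by positivity)]
  calc y * L ^ (ρ - 1) * growthConstant ρ ≤ (L + y) ^ ρ :=
        add_comm y L ▸ mul_rpow_mul_growthConstant_le hρ hy hL.le
    _ = (L + y) * (L + y) ^ (ρ - 1) := by
        rw [Real.rpow_sub_one hsum.ne', mul_div_cancel₀ _ hsum.ne']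
    _ ≤ m * a * (L + y) ^ (ρ - 1) := by gcongr
    _ = m * (a * (L + y) ^ (ρ - 1)) := mul_assoc _ _ _

section LowerBound

variable {ι : Type*} {g : ι → ℝ≥0 → ℝ} {s : ℕ} {c m : ℝ}

/-- The state of a search after finitely many excursions: robot `r` has stayed in
`[-reach r, reach r]` while its excursions had total length `load r - c`, and the `s` robots of
`front` have reached farthest. The offset `c > 0` keeps the loads positive from the start. -/
structure Stage (g : ι → ℝ≥0 → ℝ) (s : ℕ) (c m : ℝ) where
  reach : ι → ℝ
  load : ι → ℝ
  front : Finset ι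
  card_front : front.card = s
  isConfined : ∀ r, IsConfined (g r) (reach r) (load r - c)
  le_load : ∀ r, c ≤ load r
  one_le_reach : ∀ b ∈ front, 1 ≤ reach b
  reach_le_reach : ∀ r ∉ front, ∀ b ∈ front, reach r ≤ reach b
  load_le : ∀ r, ∀ b ∈ front, load r ≤ m * reach b

namespace Stage

theorem nonempty_of_map_zero [Fintype ι] (hs : s ≤ Fintype.card ι) (hcm : c ≤ m)
    (h₀ : ∀ r, g r 0 = 0) : Nonempty (Stage g s c m) := by
  obtain ⟨B, -, hB⟩ := Finset.exists_subset_card_eq (s := (Finset.univ : Finset ι)) hs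
  exact ⟨{
    reach := fun _ => 1
    load := fun _ => c
    front := B
    card_front := hB
    isConfined := fun r => (sub_self c).symm ▸ isConfined_zero (h₀ r) zero_le_one
    le_load := fun _ => le_rfl
    one_le_reach := fun _ _ => le_rfl
    reach_le_reach := fun _ _ _ _ => le_rfl
    load_le := fun _ _ _ => hcm.trans_eq (mul_one m).symm }⟩

theorem load_pos (hc : 0 < c) (σ : Stage g s c m) (r : ι) : 0 < σ.load r :=
  hc.trans_le (σ.le_load r)

theorem exists_hindmost (hs : 0 < s) (σ : Stage g s c m) :
    ∃ r₀ ∈ σ.front, ∀ b ∈ σ.front, σ.reach r₀ ≤ σ.reach b :=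
  σ.front.exists_min_image σ.reach (Finset.card_pos.mp (hs.trans_eq σ.card_front.symm))

section Potential

variable [Fintype ι]

/-- The potential `∏ reach / (∏ load) ^ θ`, in which only the robots of the front count for the
numerator. -/
noncomputable def potential (θ : ℝ) (σ : Stage g s c m) : ℝ :=
  (∏ b ∈ σ.front, σ.reach b) / (∏ r, σ.load r) ^ θ

theorem prod_load_pos (hc : 0 < c) (σ : Stage g s c m) : 0 < ∏ r, σ.load r :=
  Finset.prod_pos fun r _ => σ.load_pos hc r

theorem potential_nonneg (hc : 0 < c) (σ : Stage g s c m) {θ : ℝ} : 0 ≤ σ.potential θ :=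
  div_nonneg (Finset.prod_nonneg fun b hb => zero_le_one.trans (σ.one_le_reach b hb))
    (Real.rpow_nonneg (σ.prod_load_pos hc).le θ)

theorem inv_pow_le_potential (hc : 0 < c) (hm : 0 < m) (hs : 0 < s) (σ : Stage g s c m) :
    (m ^ s)⁻¹ ≤ σ.potential (s / Fintype.card ι) := by
  obtain ⟨r₀, hr₀, hmin⟩ := σ.exists_hindmost hs
  have : Nonempty ι := ⟨r₀⟩
  have ha : 0 < σ.reach r₀ := one_pos.trans_le (σ.one_le_reach r₀ hr₀)
  have hreach : σ.reach r₀ ^ s ≤ ∏ b ∈ σ.front, σ.reach b := by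
    simpa only [Finset.prod_const, σ.card_front] using
      Finset.prod_le_prod (f := fun _ => σ.reach r₀) (fun _ _ => ha.le) hmin
  have hload : (∏ r, σ.load r) ^ (s / Fintype.card ι : ℝ) ≤ (m * σ.reach r₀) ^ s := by
    have hprod : ∏ r, σ.load r ≤ (m * σ.reach r₀) ^ Fintype.card ι := by
      rw [← Finset.card_univ, ← Finset.prod_const]
      exact Finset.prod_le_prod (fun r _ => (σ.load_pos hc r).le) fun r _ => σ.load_le r r₀ hr₀
    calc (∏ r, σ.load r) ^ (s / Fintype.card ι : ℝ)
        ≤ ((m * σ.reach r₀) ^ Fintype.card ι) ^ (s / Fintype.card ι : ℝ) :=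
          Real.rpow_le_rpow (σ.prod_load_pos hc).le hprod (by positivity)
      _ = (m * σ.reach r₀) ^ s := by
          rw [← Real.rpow_natCast_mul (by positivity), mul_div_cancel₀ _ (by positivity),
            Real.rpow_natCast]
  calc (m ^ s)⁻¹ = σ.reach r₀ ^ s / (m * σ.reach r₀) ^ s := by
        rw [mul_pow]
        field_simp
    _ ≤ σ.potential (s / Fintype.card ι) :=
        div_le_div₀ (Finset.prod_nonneg fun b hb => zero_le_one.trans (σ.one_le_reach b hb)) hreach
          (Real.rpow_pos_of_pos (σ.prod_load_pos hc) _) hload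

end Potential

variable [DecidableEq ι]

/-- The next excursion: robot `r` turns at distance `y` and replaces the hindmost robot `r₀` of the
front, possibly `r` itself. -/
structure IsMove (σ : Stage g s c m) (r₀ r : ι) (y : ℝ) : Prop where
  mem_front : r₀ ∈ σ.front
  reach_le : ∀ b ∈ σ.front, σ.reach r₀ ≤ σ.reach b
  notMem_erase : r ∉ σ.front.erase r₀
  le_turn : σ.reach r₀ ≤ y
  isConfined_turn : IsConfined (g r) y (σ.load r + y - c)
  load_add_le : σ.load r + y ≤ m * σ.reach r₀

theorem reach_le_of_notMem_erase (σ : Stage g s c m) {r₀ r : ι} (hr₀ : r₀ ∈ σ.front)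
    (hr : r ∉ σ.front.erase r₀) : σ.reach r ≤ σ.reach r₀ := by
  obtain rfl | hne := eq_or_ne r r₀
  · rfl
  · exact σ.reach_le_reach r (fun hmem => hr (Finset.mem_erase.mpr ⟨hne, hmem⟩)) r₀ hr₀

theorem IsMove.reach_le_update {σ : Stage g s c m} {r₀ r : ι} {y : ℝ} (hmove : σ.IsMove r₀ r y) :
    ∀ b ∈ insert r (σ.front.erase r₀), σ.reach r₀ ≤ Function.update σ.reach r y b := by
  rw [Finset.forall_mem_insert, Function.update_self]
  refine ⟨hmove.le_turn, fun b hb => ?_⟩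
  rw [Function.update_of_ne (ne_of_mem_of_not_mem hb hmove.notMem_erase)]
  exact hmove.reach_le b (Finset.mem_of_mem_erase hb)

theorem IsMove.one_le_reach {σ : Stage g s c m} {r₀ r : ι} {y : ℝ} (hmove : σ.IsMove r₀ r y) :
    1 ≤ σ.reach r₀ :=
  σ.one_le_reach r₀ hmove.mem_front

/-- The stage reached from `σ` by a move. -/
def advance (σ : Stage g s c m) (hm : 0 ≤ m) {r₀ r : ι} {y : ℝ} (hmove : σ.IsMove r₀ r y) :
    Stage g s c m where
  reach := Function.update σ.reach r y
  load := Function.update σ.load r (σ.load r + y)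
  front := insert r (σ.front.erase r₀)
  card_front := by
    rw [Finset.card_insert_of_notMem hmove.notMem_erase,
      Finset.card_erase_add_one hmove.mem_front, σ.card_front]
  isConfined r' := by
    obtain rfl | hne := eq_or_ne r' r
    · simpa only [Function.update_self] using hmove.isConfined_turn
    · simpa only [Function.update_of_ne hne] using σ.isConfined r'
  le_load := by
    have hy : 0 ≤ y := zero_le_one.trans (hmove.one_le_reach.trans hmove.le_turn)
    rw [Function.forall_update_iff _ fun _ L => c ≤ L]
    exact ⟨(σ.le_load r).trans (le_add_of_nonneg_right hy), fun r' _ => σ.le_load r'⟩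
  one_le_reach b hb := hmove.one_le_reach.trans (hmove.reach_le_update b hb)
  reach_le_reach r' hr' b hb := by
    rw [Finset.mem_insert, not_or] at hr'
    rw [Function.update_of_ne hr'.1]
    exact (σ.reach_le_of_notMem_erase hmove.mem_front hr'.2).trans (hmove.reach_le_update b hb)
  load_le r' b hb := by
    refine le_trans ?_ (mul_le_mul_of_nonneg_left (hmove.reach_le_update b hb) hm)
    revert r'
    rw [Function.forall_update_iff _ fun _ L => L ≤ m * σ.reach r₀]
    exact ⟨hmove.load_add_le, fun r' _ => σ.load_le r' r₀ hmove.mem_front⟩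

theorem potential_advance [Fintype ι] (hc : 0 < c) (hm : 0 ≤ m) {σ : Stage g s c m}
    {r₀ r : ι} {y θ : ℝ} (hmove : σ.IsMove r₀ r y) :
    (σ.advance hm hmove).potential θ =
      y / σ.reach r₀ * (σ.load r / (σ.load r + y)) ^ θ * σ.potential θ := by
  have ha : 0 < σ.reach r₀ := one_pos.trans_le hmove.one_le_reach
  have hy : 0 < y := ha.trans_le hmove.le_turn
  have hload := σ.load_pos hc
  have hrest : 0 < ∏ i ∈ Finset.univ.erase r, σ.load i := Finset.prod_pos fun i _ => hload i
  have hreach : ∏ b ∈ insert r (σ.front.erase r₀), Function.update σ.reach r y b =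
      y * ∏ b ∈ σ.front.erase r₀, σ.reach b := by
    rw [Finset.prod_insert hmove.notMem_erase, Function.update_self,
      Finset.prod_update_of_notMem hmove.notMem_erase]
  have hloads : ∏ i, Function.update σ.load r (σ.load r + y) i =
      (σ.load r + y) * ∏ i ∈ Finset.univ.erase r, σ.load i := by
    rw [Finset.prod_update_of_mem (Finset.mem_univ r), Finset.sdiff_singleton_eq_erase]
  simp only [potential, advance]
  rw [hreach, hloads, ← Finset.mul_prod_erase σ.front σ.reach hmove.mem_front,
    ← Finset.mul_prod_erase Finset.univ σ.load (Finset.mem_univ r),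
    Real.mul_rpow (add_pos (hload r) hy).le hrest.le, Real.mul_rpow (hload r).le hrest.le,
    Real.div_rpow (hload r).le (add_pos (hload r) hy).le]
  have hne := (Real.rpow_pos_of_pos (hload r) θ).ne'
  field_simp

end Stage

variable [Fintype ι] {q : ℕ} {lam : ℝ}

theorem IsSearchStrategy.exists_notMem_visits_both
    (h : IsSearchStrategy q lam g) (hs : Fintype.card ι + s ≤ 2 * q) {x : ℝ} (hx : 1 ≤ x)
    {B : Finset ι} (hB : B.card < s) :
    ∃ r ∉ B, Visits (g r) (lam * x) x ∧ Visits (g r) (lam * x) (-x) := by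
  have habs : |x| = x := abs_of_nonneg (zero_le_one.trans hx)
  have hpos := h.le_ncard_visits x (by rwa [habs])
  have hneg := h.le_ncard_visits (-x) (by rwa [abs_neg, habs])
  rw [habs] at hpos
  rw [abs_neg, habs] at hneg
  set P : Set ι := {r | Visits (g r) (lam * x) x}
  set N : Set ι := {r | Visits (g r) (lam * x) (-x)}
  have hinter := Set.ncard_inter_add_ncard_union P N
  have hunion : (P ∪ N).ncard ≤ Fintype.card ι :=
    (Set.ncard_le_card _).trans_eq Nat.card_eq_fintype_card
  obtain ⟨r, hr, hrB⟩ := Set.exists_mem_notMem_of_ncard_lt_ncard (s := (B : Set ι)) (t := P ∩ N)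
    (by rw [Set.ncard_coe_finset]; omega)
  exact ⟨r, hrB, hr⟩

theorem IsSearchStrategy.le_card (h : IsSearchStrategy q lam g) :
    q ≤ Fintype.card ι :=
  (h.le_ncard_visits 1 (by simp)).trans ((Set.ncard_le_card _).trans_eq Nat.card_eq_fintype_card)

/-- The robot to move is found among those visiting both points at a distance slightly beyond the
reach of the hindmost robot of the front. -/
theorem IsSearchStrategy.exists_isMove [DecidableEq ι]
    (h : IsSearchStrategy q lam g) (hs : Fintype.card ι + s ≤ 2 * q) (hs₀ : 0 < s) (hc : 0 < c)
    (hm : (lam - 1) / 2 * (1 + c) + c ≤ m) (σ : Stage g s c m) :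
    ∃ r₀ r y, σ.IsMove r₀ r y := by
  obtain ⟨r₀, hr₀, hmin⟩ := σ.exists_hindmost hs₀
  have ha : 1 ≤ σ.reach r₀ := σ.one_le_reach r₀ hr₀
  have hax : σ.reach r₀ < (1 + c) * σ.reach r₀ := by nlinarith
  obtain ⟨r, hr, hpos, hneg⟩ := h.exists_notMem_visits_both hs (ha.trans hax.le)
    (B := σ.front.erase r₀) ((Finset.card_erase_lt_of_mem hr₀).trans_eq σ.card_front)
  obtain ⟨y, hxy, hconf, htime⟩ := (σ.isConfined r).exists_turn_of_visits (h.lipschitz r)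
    (h.map_zero r) ((σ.reach_le_of_notMem_erase hr₀ hr).trans_lt hax) hpos hneg
  rw [sub_add_eq_add_sub] at hconf htime
  refine ⟨r₀, r, y, hr₀, hmin, hr, hax.le.trans hxy, hconf, ?_⟩
  calc σ.load r + y ≤ (lam - 1) / 2 * ((1 + c) * σ.reach r₀) + c * 1 := by linarith
    _ ≤ (lam - 1) / 2 * ((1 + c) * σ.reach r₀) + c * σ.reach r₀ := by gcongr
    _ = ((lam - 1) / 2 * (1 + c) + c) * σ.reach r₀ := by ring
    _ ≤ m * σ.reach r₀ := by gcongr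

theorem IsSearchStrategy.exists_potential_le {θ : ℝ}
    (h : IsSearchStrategy q lam g) (hs : Fintype.card ι + s ≤ 2 * q) (hs₀ : 0 < s) (hθ : 0 < θ)
    (hc : 0 < c) (hm₀ : 0 ≤ m) (hm : (lam - 1) / 2 * (1 + c) + c ≤ m) (σ : Stage g s c m) :
    ∃ σ' : Stage g s c m,
      σ'.potential θ ≤ m / growthConstant (1 + θ) * σ.potential θ := by
  classical
  obtain ⟨r₀, r, y, hmove⟩ := h.exists_isMove hs hs₀ hc hm σ
  have ha : 0 < σ.reach r₀ := one_pos.trans_le hmove.one_le_reach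
  have hfactor := div_mul_rpow_le_div_growthConstant (lt_add_of_pos_right 1 hθ) ha
    (ha.le.trans hmove.le_turn) (σ.load_pos hc r) hmove.load_add_le
  rw [add_sub_cancel_left] at hfactor
  refine ⟨σ.advance hm₀ hmove, ?_⟩
  rw [Stage.potential_advance hc]
  exact mul_le_mul_of_nonneg_right hfactor (σ.potential_nonneg hc)

theorem IsSearchStrategy.growthConstant_le_of_slack
    (h : IsSearchStrategy q lam g) (hs : Fintype.card ι + s ≤ 2 * q) (hs₀ : 0 < s)
    (hsk : s ≤ Fintype.card ι) (hc : 0 < c) (hcm : c ≤ m)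
    (hm : (lam - 1) / 2 * (1 + c) + c ≤ m) :
    growthConstant (1 + s / Fintype.card ι) ≤ m := by
  set θ : ℝ := s / Fintype.card ι
  have hθ : 0 < θ := div_pos (mod_cast hs₀) (mod_cast hs₀.trans_le hsk)
  have hm₀ : 0 < m := hc.trans_le hcm
  have hgrowth : 0 < growthConstant (1 + θ) := growthConstant_pos (lt_add_of_pos_right 1 hθ)
  by_contra! hlt
  obtain ⟨σ₀⟩ := Stage.nonempty_of_map_zero hsk hcm h.map_zero
  have hdecay : ∀ n : ℕ, ∃ σ : Stage g s c m,
      σ.potential θ ≤ (m / growthConstant (1 + θ)) ^ n * σ₀.potential θ := by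
    intro n
    induction n with
    | zero => exact ⟨σ₀, by rw [pow_zero, one_mul]⟩
    | succ n ih =>
      obtain ⟨σ, hσ⟩ := ih
      obtain ⟨σ', hσ'⟩ := h.exists_potential_le hs hs₀ hθ hc hm₀.le hm σ
      refine ⟨σ', hσ'.trans ?_⟩
      rw [pow_succ', mul_assoc]
      gcongr
  have hbound : 0 < (m ^ s)⁻¹ := inv_pos.mpr (pow_pos hm₀ s)
  have hpot₀ : 0 < σ₀.potential θ := hbound.trans_le (σ₀.inv_pow_le_potential hc hm₀ hs₀)
  obtain ⟨n, hn⟩ := exists_pow_lt_of_lt_one (div_pos hbound hpot₀) ((div_lt_one hgrowth).mpr hlt)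
  obtain ⟨σ, hσ⟩ := hdecay n
  exact ((lt_div_iff₀ hpot₀).mp hn).not_ge ((σ.inv_pow_le_potential hc hm₀ hs₀).trans hσ)

theorem IsSearchStrategy.two_mul_growthConstant_add_one_le
    (h : IsSearchStrategy q lam g) (hlam : 1 ≤ lam) (hq : Fintype.card ι < 2 * q) :
    2 * growthConstant (2 * q / Fintype.card ι) + 1 ≤ lam := by
  have hqk : q ≤ Fintype.card ι := h.le_card
  obtain ⟨s, hs⟩ := Nat.exists_eq_add_of_lt hq
  have hk : (0 : ℝ) < Fintype.card ι := by norm_cast; omega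
  have hρ : (2 * q / Fintype.card ι : ℝ) = 1 + (s + 1 : ℕ) / Fintype.card ι := by
    rw [eq_div_of_mul_eq hk.ne' (one_mul _), ← add_div]
    norm_cast
    rw [hs, add_assoc]
  suffices growthConstant (2 * q / Fintype.card ι) ≤ (lam - 1) / 2 by linarith
  refine le_of_forall_pos_le_add fun ε hε => ?_
  have hμ : 0 ≤ (lam - 1) / 2 := by linarith
  set μ : ℝ := (lam - 1) / 2
  have hc : 0 < ε / (μ + 1) := by positivity
  have hslack : μ * (1 + ε / (μ + 1)) + ε / (μ + 1) = μ + ε := by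
    field_simp
    ring
  rw [hρ]
  refine h.growthConstant_le_of_slack (by omega) s.succ_pos (by omega) hc ?_ hslack.le
  rw [← hslack]
  exact le_add_of_nonneg_left (by positivity)

end LowerBound

theorem exists_isSearchStrategy {k q : ℕ} (hkq : k < 2 * q) (hqk : q ≤ k) :
    ∃ g : Fin k → ℝ≥0 → ℝ, IsSearchStrategy q (2 * growthConstant (2 * q / k) + 1) g := by
  have hk : (0 : ℝ) < k := by norm_cast; omega
  set ρ : ℝ := 2 * q / k with hρ
  have hρ₁ : 0 < ρ - 1 := by
    rw [sub_pos, hρ, one_lt_div hk]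
    exact_mod_cast hkq
  have hρ₀ : 0 < ρ := by linarith
  have hβ : 1 < ρ / (ρ - 1) := (one_lt_div hρ₁).mpr (sub_one_lt ρ)
  set β : ℝ := ρ / (ρ - 1) with hβ_def
  have hβ₀ : 0 ≤ β := zero_le_one.trans hβ.le
  have hpow_k : (β ^ (2 / k : ℝ)) ^ k = β ^ 2 := by
    rw [← Real.rpow_mul_natCast hβ₀, div_mul_cancel₀ _ hk.ne', Real.rpow_two]
  have hpow_q : (β ^ (2 / k : ℝ)) ^ q = β ^ ρ := by
    rw [← Real.rpow_mul_natCast hβ₀, div_mul_eq_mul_div]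
  have hconst : β ^ ρ / (β - 1) = growthConstant ρ := by
    have hsub : β - 1 = 1 / (ρ - 1) := by
      rw [hβ_def]
      field_simp
      ring
    rw [growthConstant, hsub, Real.div_rpow hρ₀.le hρ₁.le, Real.rpow_sub_one hρ₁.ne']
    field_simp
  rw [← hconst, ← hpow_q]
  exact exists_isSearchStrategy_of_pow_eq_sq hqk hβ (Real.one_lt_rpow hβ (by positivity)) hpow_k

/-- The optimal competitive ratio `A(k,f)` for searching the real line with `k`
robots, `f` of which are faulty of crash type, equals `2 ρ^ρ/(ρ-1)^(ρ-1) + 1`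
where `ρ = 2(f+1)/k`. -/
theorem line_search_crash_competitive_ratio
    (k f : ℕ) (hks : k < 2 * (f + 1)) (hsk : f + 1 ≤ k)
    (ρ : ℝ) (hρ : ρ = 2 * (f + 1) / k) :
    sInf {lam : ℝ | 1 ≤ lam ∧
        ∃ g : Fin k → ℝ≥0 → ℝ,
          (∀ r, LipschitzWith 1 (g r)) ∧ (∀ r, g r 0 = 0) ∧
          ∀ x : ℝ, 1 ≤ |x| →
            f + 1 ≤ {r : Fin k | ∃ t : ℝ≥0, (t : ℝ) ≤ lam * |x| ∧ g r t = x}.ncard}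
      = 2 * ρ ^ ρ / (ρ - 1) ^ (ρ - 1) + 1 := by
  have hρ_cast : ρ = 2 * (f + 1 : ℕ) / k := by rw [hρ, Nat.cast_add_one]
  have hk : (0 : ℝ) < k := by norm_cast; omega
  have hρ₁ : 1 < ρ := by
    rw [hρ, one_lt_div hk]
    exact_mod_cast hks
  rw [mul_div_assoc]
  change _ = 2 * growthConstant ρ + 1
  refine IsLeast.csInf_eq ⟨⟨?_, ?_⟩, ?_⟩
  · linarith [growthConstant_pos hρ₁]
  · obtain ⟨g, hg⟩ := exists_isSearchStrategy hks hsk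
    exact ⟨g, hg.lipschitz, hg.map_zero, hρ_cast ▸ hg.le_ncard_visits⟩
  · rintro lam ⟨hlam, g, hg, hg₀, hvisits⟩
    have hstrategy : IsSearchStrategy (f + 1) lam g := ⟨hg, hg₀, hvisits⟩
    simpa only [hρ_cast, Fintype.card_fin] using
      hstrategy.two_mul_growthConstant_add_one_le hlam (by rwa [Fintype.card_fin])
end

section
/- Let m, k, f be natural numbers with f < k < m(f+1), set q := m(f+1) and λ_0 := 2·(q^q/((q-k)^{q-k} · k^k))^{1/k} + 1. Then the infimum of the set of reals λ > 1 for which there exist k round strategies σ^{(1)}, …, σ^{(k)} on m rays such that every point at distance x ≥ 1 on each of the m rays is λ-covered by at least f+1 of the k robots, equals λ_0. -/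
/-!
Put `μ = (λ - 1) / 2`, `q = m (f + 1)` and let `S_j` be the sum of the turning distances before
round `j`. In the logarithmic coordinate `y = log x`, round `j` of a robot covers the interval from
`log (S_j / μ)` to `log t_j`, and all robots together must cover `[0, log N]` on the `m` rays with
total multiplicity `q`.

Lower bound: if `log (μ x) ≤ c log (1 + x)` for all `x > 0`, then with `x = t_j / S_j` the length of
the interval of round `j` is at most `c (log S_{j+1} - log S_j)`. This telescopes, so a robot covers
total length at most `c log N + O(1)`, whence `q ≤ k c`. By the concavity of `log`, there is such a
`c < q / k` as soon as `(k / q) log μ` is less than the binary entropy of `k / q`.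

Upper bound: for `b > 1`, let the robots `r ∈ ℤ/k` turn at the distances `b ^ (k j + m r)` on ray
`j mod m`, for those `j ∈ ℤ` with nonnegative exponent. Then the exponents of the turning points on
ray `i` form the arithmetic progression `k i + m u`, `u ∈ ℤ`, the one with index `u` belonging to
robot `u mod k`. Any `q` consecutive integers contain `f + 1 ≤ k` of these exponents, so `f + 1`
different robots cover a given point for `μ = b ^ q / (b ^ k - 1)`; the best base is given by
`b ^ k = q / (q - k)`.
-/

open Real Finset MeasureTheory
open Fintype (card)

variable {ι ρ : Type*}

/-- The point at distance `x` on ray `i` is `λ`-covered, for `λ = 2 * μ + 1`, by the robot following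
the round strategy `σ`: it is reached in some round before which the robot has turned at distances
with sum at most `μ * x`. -/
def CoversPoint (μ : ℝ) (σ : ℕ → ι × ℝ) (i : ι) (x : ℝ) : Prop :=
  ∃ j, (σ j).1 = i ∧ x ≤ (σ j).2 ∧ ∑ l ∈ range j, (σ l).2 ≤ μ * x

/-- The round strategies `σ r` of the robots `r : ρ` on the rays `i : ι` form a protocol in which
every point at distance at least `1` is `λ`-covered by at least `s` robots, where `λ = 2 * μ + 1`.
With `s = f + 1` this is a protocol of competitive ratio `λ` against `f` crash faults. -/
def IsRaySearch (s : ℕ) (μ : ℝ) (σ : ρ → ℕ → ι × ℝ) : Prop :=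
  (∀ r j, 1 ≤ (σ r j).2) ∧
    ∀ i x, 1 ≤ x → s ≤ {r | CoversPoint μ (σ r) i x}.ncard

/-- The smallest `μ` for which `k` robots can search with total multiplicity `q`, that is, with
`q = (number of rays) * s` in `IsRaySearch s μ`. -/
noncomputable def optimalOverhead (q k : ℕ) : ℝ :=
  ((q : ℝ) ^ q / (((q - k : ℕ) : ℝ) ^ (q - k) * (k : ℝ) ^ k)) ^ ((1 : ℝ) / k)

section OptimalOverhead

variable {q k : ℕ}

lemma optimalOverhead_pos (hk : 0 < k) (hkq : k < q) : 0 < optimalOverhead q k := by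
  have : 0 < q - k := Nat.sub_pos_of_lt hkq
  have : 0 < q := hk.trans hkq
  unfold optimalOverhead
  positivity

lemma optimalOverhead_pow (hk : 0 < k) :
    optimalOverhead q k ^ k = (q : ℝ) ^ q / (((q - k : ℕ) : ℝ) ^ (q - k) * (k : ℝ) ^ k) := by
  rw [optimalOverhead, one_div, rpow_inv_natCast_pow (by positivity) hk.ne']

lemma mul_log_optimalOverhead (hk : 0 < k) (hkq : k < q) :
    (k / q : ℝ) * log (optimalOverhead q k) = binEntropy (k / q) := by
  obtain ⟨d, hd, rfl⟩ : ∃ d, 0 < d ∧ q = d + k := ⟨q - k, by omega, by omega⟩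
  have hdk : (0 : ℝ) < (d + k : ℕ) := by positivity
  have one_sub : 1 - (k / (d + k : ℕ) : ℝ) = d / (d + k : ℕ) := by
    rw [one_sub_div hdk.ne']
    push_cast
    ring
  rw [div_mul_eq_mul_div, ← log_pow, optimalOverhead_pow hk, Nat.add_sub_cancel, binEntropy,
    one_sub, inv_div, inv_div, log_div (by positivity) (by positivity),
    log_mul (by positivity) (by positivity), log_div (by positivity) (by positivity),
    log_div (by positivity) (by positivity), log_pow, log_pow, log_pow]
  field_simp
  push_cast
  ring

lemma exists_base_eq_optimalOverhead (hk : 0 < k) (hkq : k < q) :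
    ∃ b : ℝ, 1 < b ∧ b ^ q / (b ^ k - 1) = optimalOverhead q k := by
  obtain ⟨d, hd, rfl⟩ : ∃ d, 0 < d ∧ q = d + k := ⟨q - k, by omega, by omega⟩
  have hb : (1 : ℝ) < (d + k : ℕ) / d := by
    rw [one_lt_div (by positivity)]
    exact_mod_cast Nat.lt_add_of_pos_right hk
  refine ⟨((d + k : ℕ) / d : ℝ) ^ (k⁻¹ : ℝ), one_lt_rpow hb (by positivity), ?_⟩
  have base_pow : (((d + k : ℕ) / d : ℝ) ^ (k⁻¹ : ℝ)) ^ k = (d + k : ℕ) / d :=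
    rpow_inv_natCast_pow (by positivity) hk.ne'
  have base_pow_sub_one : ((d + k : ℕ) / d : ℝ) - 1 = k / d := by
    push_cast
    field_simp
    ring
  refine (pow_left_inj₀ ?_ (optimalOverhead_pos hk hkq).le hk.ne').1 ?_
  · rw [base_pow, base_pow_sub_one]
    positivity
  · rw [optimalOverhead_pow hk, Nat.add_sub_cancel, div_pow, ← pow_mul, mul_comm (d + k) k, pow_mul,
      base_pow, base_pow_sub_one, div_pow, div_pow, pow_add (d : ℝ)]
    field_simp

end OptimalOverhead

section LogInequalities

lemma mul_log_add_binEntropy_le_log_one_add {θ x : ℝ} (hθ₀ : 0 < θ) (hθ₁ : θ < 1) (hx : 0 < x) :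
    θ * log x + binEntropy θ ≤ log (1 + x) := by
  have h1θ : 0 < 1 - θ := sub_pos.2 hθ₁
  have jensen := strictConcaveOn_log_Ioi.concaveOn.2 (Set.mem_Ioi.2 (inv_pos.2 h1θ))
    (Set.mem_Ioi.2 (div_pos hx hθ₀)) h1θ.le hθ₀.le (sub_add_cancel 1 θ)
  simp only [smul_eq_mul] at jensen
  rw [mul_inv_cancel₀ h1θ.ne', mul_div_cancel₀ _ hθ₀.ne', log_div hx.ne' hθ₀.ne'] at jensen
  rw [binEntropy, log_inv θ]
  linarith

lemma exists_log_mul_le_mul_log_one_add {θ μ : ℝ} (hθ₀ : 0 < θ) (hθ₁ : θ < 1) (hμ : 0 < μ)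
    (h : θ * log μ < binEntropy θ) :
    ∃ c, 1 ≤ c ∧ c < θ⁻¹ ∧ ∀ x, 0 < x → log (μ * x) ≤ c * log (1 + x) := by
  have h_near : ∀ᶠ φ in nhdsWithin θ (Set.Ioi θ), φ * log μ < binEntropy φ :=
    nhdsWithin_le_nhds <| ContinuousAt.eventually_lt (by fun_prop)
      binEntropy_continuous.continuousAt h
  obtain ⟨φ, hφ, hθφ, hφ₁⟩ := (h_near.and (Ioo_mem_nhdsGT hθ₁)).exists
  have hφ₀ : 0 < φ := hθ₀.trans hθφ
  refine ⟨φ⁻¹, (one_le_inv₀ hφ₀).2 hφ₁.le, inv_strictAnti₀ hθ₀ hθφ, fun x hx ↦ ?_⟩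
  rw [← div_eq_inv_mul, le_div_iff₀ hφ₀, log_mul hμ.ne' hx.ne']
  linarith [mul_log_add_binEntropy_le_log_one_add hφ₀ hφ₁ hx]

lemma le_of_forall_mul_log_le_mul_log_mul {p q A : ℝ} (hA : 0 < A)
    (h : ∀ N, 1 ≤ N → q * log N ≤ p * log (A * N)) : q ≤ p := by
  by_contra! hpq
  have hqp : 0 < q - p := sub_pos.2 hpq
  have h_exp := h (exp ((|p * log A| + 1) / (q - p))) (one_le_exp (by positivity))
  rw [log_mul hA.ne' (exp_ne_zero _), log_exp] at h_exp
  have h_cancel : (q - p) * ((|p * log A| + 1) / (q - p)) = |p * log A| + 1 :=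
    mul_div_cancel₀ _ hqp.ne'
  linarith [le_abs_self (p * log A)]

end LogInequalities

section Multiplicity

lemma natCast_mul_measure_le_sum_measure {α β : Type*} [MeasurableSpace α] (ν : Measure α)
    {J : Finset β} {A : β → Set α} [∀ x, DecidablePred fun j ↦ x ∈ A j]
    (hA : ∀ j ∈ J, MeasurableSet (A j)) {E : Set α} {n : ℕ} (hE : ∀ x ∈ E, n ≤ #{j ∈ J | x ∈ A j}) :
    n * ν E ≤ ∑ j ∈ J, ν (A j) := by
  have measurable_indicator (j) (hj : j ∈ J) : Measurable ((A j).indicator (1 : α → ENNReal)) :=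
    measurable_one.indicator (hA j hj)
  calc n * ν E ≤ n * ν {x | n ≤ ∑ j ∈ J, (A j).indicator (1 : α → ENNReal) x} := by
        gcongr
        intro x hx
        simpa [Set.indicator_apply] using hE x hx
    _ ≤ ∫⁻ x, ∑ j ∈ J, (A j).indicator (1 : α → ENNReal) x ∂ν :=
        mul_meas_ge_le_lintegral (Finset.measurable_fun_sum J measurable_indicator) _
    _ = ∑ j ∈ J, ν (A j) := by
        rw [lintegral_finsetSum J measurable_indicator]
        exact sum_congr rfl fun j hj ↦ lintegral_indicator_one (hA j hj)

lemma natCast_mul_sub_le_sum_max_sub {β : Type*} {J : Finset β} {a b : β → ℝ} {u v : ℝ} {n : ℕ}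
    (h : ∀ y ∈ Set.Icc u v, n ≤ #{j ∈ J | y ∈ Set.Icc (a j) (b j)}) :
    n * (v - u) ≤ ∑ j ∈ J, max 0 (b j - a j) := by
  have h_volume := natCast_mul_measure_le_sum_measure volume
    (A := fun j ↦ Set.Icc (a j) (b j)) (fun _ _ ↦ measurableSet_Icc) h
  simp only [volume_Icc] at h_volume
  rw [← ENNReal.ofReal_le_ofReal_iff (by positivity), ENNReal.ofReal_mul n.cast_nonneg,
    ENNReal.ofReal_natCast, ENNReal.ofReal_sum_of_nonneg fun _ _ ↦ le_max_left _ _]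
  exact h_volume.trans (sum_le_sum fun j _ ↦ ENNReal.ofReal_le_ofReal (le_max_right _ _))

end Multiplicity

section LowerBound

/-- The left end, in the coordinate `y = log x` and cut off at `y = 0`, of the interval of distances
covered in round `j` by a robot with turning distances `t`; the right end is `log (t j)`. -/
noncomputable def logCoverStart (μ : ℝ) (t : ℕ → ℝ) (j : ℕ) : ℝ :=
  log (max 1 ((∑ l ∈ range j, t l) / μ))

variable {μ c N : ℝ} {t : ℕ → ℝ}

lemma logCoverStart_nonneg (j : ℕ) : 0 ≤ logCoverStart μ t j :=
  log_nonneg (le_max_left _ _)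

lemma logCoverStart_le {j : ℕ} {y : ℝ} (hμ : 0 < μ) (hy : 0 ≤ y)
    (h : ∑ l ∈ range j, t l ≤ μ * exp y) : logCoverStart μ t j ≤ y :=
  (log_le_iff_le_exp (by positivity)).2 (max_le (one_le_exp hy) ((div_le_iff₀' hμ).2 h))

lemma natCast_le_sum_range (ht : ∀ j, 1 ≤ t j) (n : ℕ) : (n : ℝ) ≤ ∑ l ∈ range n, t l := by
  simpa using card_nsmul_le_sum (range n) t 1 fun l _ ↦ ht l

lemma exists_sum_range_le_lt_sum_range_succ (ht : ∀ j, 1 ≤ t j) {B : ℝ} (hB : 0 ≤ B) :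
    ∃ n, ∑ l ∈ range n, t l ≤ B ∧ B < ∑ l ∈ range (n + 1), t l := by
  obtain ⟨M, hM⟩ := exists_nat_gt B
  simpa using Nat.exists_not_and_succ_of_not_zero_of_exists (p := fun n ↦ B < ∑ l ∈ range n, t l)
    (by simpa using hB) ⟨M, hM.trans_le (natCast_le_sum_range ht M)⟩

lemma log_sub_logCoverStart_le (hμ : 0 < μ)
    (hlog : ∀ x, 0 < x → log (μ * x) ≤ c * log (1 + x)) {j : ℕ} (htj : 0 < t j)
    (hS : 0 < ∑ l ∈ range j, t l) :
    log (t j) - logCoverStart μ t j ≤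
      c * log (∑ l ∈ range (j + 1), t l) - c * log (∑ l ∈ range j, t l) := by
  rw [sum_range_succ]
  set S := ∑ l ∈ range j, t l
  have h_start : log (S / μ) ≤ logCoverStart μ t j :=
    log_le_log (by positivity) (le_max_right _ _)
  have h_ratio := hlog (t j / S) (by positivity)
  rw [one_add_div hS.ne', log_div (by positivity) hS.ne', log_mul hμ.ne' (by positivity),
    log_div htj.ne' hS.ne'] at h_ratio
  rw [log_div hS.ne' hμ.ne'] at h_start
  linarith

lemma sum_max_log_sub_logCoverStart_le (ht : ∀ j, 1 ≤ t j) (hμ : 0 < μ) (hc : 1 ≤ c)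
    (hlog : ∀ x, 0 < x → log (μ * x) ≤ c * log (1 + x)) (n : ℕ) :
    ∑ j ∈ range (n + 1), max 0 (log (t j) - logCoverStart μ t j) ≤
      c * log (∑ l ∈ range (n + 1), t l) := by
  induction n with
  | zero =>
    have h_log : 0 ≤ log (t 0) := log_nonneg (ht 0)
    simp only [zero_add, sum_range_one]
    refine max_le (by positivity) ?_
    linarith [logCoverStart_nonneg (μ := μ) (t := t) 0, le_mul_of_one_le_left h_log hc]
  | succ n ih =>
    have hS : 0 < ∑ l ∈ range (n + 1), t l :=
      sum_pos (fun j _ ↦ zero_lt_one.trans_le (ht j)) nonempty_range_add_one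
    have h_mono : c * log (∑ l ∈ range (n + 1), t l) ≤ c * log (∑ l ∈ range (n + 2), t l) := by
      refine mul_le_mul_of_nonneg_left (log_le_log hS ?_) (zero_le_one.trans hc)
      exact sum_le_sum_of_subset_of_nonneg (range_subset_range.2 (n + 1).le_succ)
        fun j _ _ ↦ zero_le_one.trans (ht j)
    have h_step := log_sub_logCoverStart_le hμ hlog (zero_lt_one.trans_le (ht (n + 1))) hS
    rw [sum_range_succ]
    linarith [max_le (sub_nonneg.2 h_mono) h_step]

lemma sum_max_log_sub_logCoverStart_le_of_le (ht : ∀ j, 1 ≤ t j) (htN : ∀ j, t j ≤ N)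
    (hμ : 0 < μ) (hc : 1 ≤ c) (hlog : ∀ x, 0 < x → log (μ * x) ≤ c * log (1 + x)) {n : ℕ}
    (hn : ∑ l ∈ range n, t l ≤ μ * N) :
    ∑ j ∈ range (n + 1), max 0 (log (t j) - logCoverStart μ t j) ≤ c * log ((μ + 1) * N) := by
  refine (sum_max_log_sub_logCoverStart_le ht hμ hc hlog n).trans ?_
  have hS : 0 < ∑ l ∈ range (n + 1), t l :=
    sum_pos (fun j _ ↦ zero_lt_one.trans_le (ht j)) nonempty_range_add_one
  gcongr
  rw [sum_range_succ]
  linarith [htN n]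

/-- The round strategy that follows `σ` but turns at distance `N` at the latest. -/
def truncateTurns (N : ℝ) (σ : ℕ → ι × ℝ) (j : ℕ) : ι × ℝ :=
  ((σ j).1, min (σ j).2 N)

lemma CoversPoint.truncateTurns {σ : ℕ → ι × ℝ} {i : ι} {x : ℝ} (h : CoversPoint μ σ i x)
    (hx : x ≤ N) : CoversPoint μ (truncateTurns N σ) i x := by
  obtain ⟨j, hi, hj, hS⟩ := h
  exact ⟨j, hi, le_min hj hx, (sum_le_sum fun l _ ↦ min_le_left _ _).trans hS⟩

open scoped Classical in
lemma card_mul_le_card_filter_mem_Icc_logCoverStart [Fintype ι] {σ : ρ → ℕ → ι × ℝ} {s : ℕ} {y : ℝ}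
    {A : Finset (Σ _ : ρ, ℕ)} (hμ : 0 < μ) (hy : 0 ≤ y)
    (hσ : ∀ i, s ≤ {r | CoversPoint μ (σ r) i (exp y)}.ncard)
    (hA : ∀ r j, ∑ l ∈ range j, (σ r l).2 ≤ μ * exp y → ⟨r, j⟩ ∈ A) :
    card ι * s ≤ #{p ∈ A | y ∈ Set.Icc (logCoverStart μ (fun j ↦ (σ p.1 j).2) p.2)
      (log (σ p.1 p.2).2)} := by
  rw [mul_comm]
  refine mul_card_image_le_card_of_maps_to (f := fun p ↦ (σ p.1 p.2).1)
    (fun _ _ ↦ mem_univ _) s fun i _ ↦ ?_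
  refine (hσ i).trans ?_
  rw [← Set.ncard_coe_finset]
  refine (Set.ncard_le_ncard ?_ (Set.toFinite _)).trans (Set.ncard_image_le (f := Sigma.fst))
  rintro r ⟨j, hi, hj, hS⟩
  refine ⟨⟨r, j⟩, ?_, rfl⟩
  simp only [coe_filter, mem_filter, Set.mem_ofPred_eq]
  exact ⟨⟨hA r j hS, logCoverStart_le hμ hy hS,
    (le_log_iff_exp_le ((exp_pos y).trans_le hj)).2 hj⟩, hi⟩

lemma IsRaySearch.card_mul_log_le [Fintype ι] [Fintype ρ] {σ : ρ → ℕ → ι × ℝ} {s : ℕ}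
    (hσ : IsRaySearch s μ σ) (hμ : 0 < μ) (hc : 1 ≤ c)
    (hlog : ∀ x, 0 < x → log (μ * x) ≤ c * log (1 + x)) (hN : 1 ≤ N) :
    ((card ι * s : ℕ) : ℝ) * log N ≤ card ρ * (c * log ((μ + 1) * N)) := by
  classical
  set τ : ρ → ℕ → ι × ℝ := fun r ↦ truncateTurns N (σ r)
  have one_le (r j) : 1 ≤ (τ r j).2 := le_min (hσ.1 r j) hN
  choose n hn_le hn_lt using fun r ↦
    exists_sum_range_le_lt_sum_range_succ (one_le r) (B := μ * N) (by positivity)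
  set A : Finset (Σ _ : ρ, ℕ) := univ.sigma fun r ↦ range (n r + 1)
  have mem_A (r j) (hS : ∑ l ∈ range j, (τ r l).2 ≤ μ * N) : ⟨r, j⟩ ∈ A := by
    have h_mono : Monotone fun n ↦ ∑ l ∈ range n, (τ r l).2 :=
      (sum_mono_set_of_nonneg fun l ↦ zero_le_one.trans (one_le r l)).comp range_mono
    simpa [A] using h_mono.reflect_lt (hS.trans_lt (hn_lt r))
  have covered (y) (hy : y ∈ Set.Icc 0 (log N)) :
      card ι * s ≤ #{p ∈ A | y ∈ Set.Icc (logCoverStart μ (fun j ↦ (τ p.1 j).2) p.2)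
        (log (τ p.1 p.2).2)} := by
    have hyN : exp y ≤ N := (le_log_iff_exp_le (by positivity)).1 hy.2
    refine card_mul_le_card_filter_mem_Icc_logCoverStart hμ hy.1 (fun i ↦ ?_) fun r j hS ↦
      mem_A r j (hS.trans (by gcongr))
    exact (hσ.2 i _ (one_le_exp hy.1)).trans
      (Set.ncard_le_ncard (fun r hr ↦ hr.truncateTurns hyN) (Set.toFinite _))
  calc ((card ι * s : ℕ) : ℝ) * log N
      ≤ ∑ p ∈ A, max 0 (log (τ p.1 p.2).2 - logCoverStart μ (fun j ↦ (τ p.1 j).2) p.2) := by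
        simpa using natCast_mul_sub_le_sum_max_sub covered
    _ ≤ ∑ _r : ρ, c * log ((μ + 1) * N) := by
        rw [sum_sigma]
        exact sum_le_sum fun r _ ↦ sum_max_log_sub_logCoverStart_le_of_le (one_le r)
          (fun j ↦ min_le_right _ _) hμ hc hlog (hn_le r)
    _ = card ρ * (c * log ((μ + 1) * N)) := by simp

theorem IsRaySearch.optimalOverhead_le [Fintype ι] [Fintype ρ] {σ : ρ → ℕ → ι × ℝ} {s : ℕ}
    (hσ : IsRaySearch s μ σ) (hμ : 0 < μ) (hρ : 0 < card ρ) (hρι : card ρ < card ι * s) :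
    optimalOverhead (card ι * s) (card ρ) ≤ μ := by
  by_contra! hlt
  have hρ' : (0 : ℝ) < card ρ := by exact_mod_cast hρ
  have hq : (0 : ℝ) < (card ι * s : ℕ) := by exact_mod_cast hρ.trans hρι
  have h_entropy : (card ρ / (card ι * s : ℕ) : ℝ) * log μ
      < binEntropy (card ρ / (card ι * s : ℕ)) := by
    rw [← mul_log_optimalOverhead hρ hρι]
    gcongr
  obtain ⟨c, hc, hcq, hlog⟩ := exists_log_mul_le_mul_log_one_add (by positivity)
    ((div_lt_one hq).2 (by exact_mod_cast hρι)) hμ h_entropy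
  have h_le : ((card ι * s : ℕ) : ℝ) ≤ card ρ * c :=
    le_of_forall_mul_log_le_mul_log_mul (A := μ + 1) (by positivity) fun N hN ↦ by
      simpa only [mul_assoc] using hσ.card_mul_log_le hμ hc hlog hN
  rw [inv_div, lt_div_iff₀' hρ'] at hcq
  exact hcq.not_ge h_le

end LowerBound

section UpperBound

variable {b : ℝ} {m k : ℕ}

/-- The optimal shape of strategies for `k` robots on `m` rays: robot `r` visits the rays
cyclically, turning at distance `b ^ (k * j + m * r)` on ray `j mod m`, where `j` runs through the
integers with `k * j + m * r ≥ 0`. Round `0` is the least such `j`, namely `-⌊m * r / k⌋`. -/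
noncomputable def geometricStrategy (b : ℝ) (m k : ℕ) (r : ZMod k) (n : ℕ) : ZMod m × ℝ :=
  let j : ℤ := n - m * r.val / k
  (j, b ^ (k * j + m * r.val))

lemma one_le_geometricStrategy [NeZero k] (hb : 1 ≤ b) (r : ZMod k) (n : ℕ) :
    1 ≤ (geometricStrategy b m k r n).2 := by
  refine one_le_zpow₀ hb ?_
  have h_div : (k : ℤ) * (m * r.val / k) ≤ m * r.val :=
    Int.mul_ediv_self_le (by exact_mod_cast NeZero.ne k)
  have h_round : (0 : ℤ) ≤ k * n := by positivity
  linarith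

lemma geometricStrategy_succ (hb : 0 < b) (r : ZMod k) (n : ℕ) :
    (geometricStrategy b m k r (n + 1)).2 = b ^ k * (geometricStrategy b m k r n).2 := by
  simp only [geometricStrategy]
  rw [← zpow_natCast, ← zpow_add₀ hb.ne']
  congr 1
  push_cast
  ring

lemma sub_one_mul_sum_range_le {t : ℕ → ℝ} {β : ℝ} (ht₀ : 0 ≤ t 0)
    (ht : ∀ n, t (n + 1) = β * t n) (n : ℕ) : (β - 1) * ∑ l ∈ range n, t l ≤ t n := by
  induction n with
  | zero => simpa using ht₀
  | succ n ih =>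
    rw [sum_range_succ, ht]
    linarith

lemma coversPoint_geometricStrategy [NeZero k] (hb : 1 < b) {q n : ℕ} {r : ZMod k} {i : ZMod m}
    {x y : ℝ} (hn : geometricStrategy b m k r n = (i, y)) (hxy : x ≤ y) (hyx : y ≤ b ^ q * x) :
    CoversPoint (b ^ q / (b ^ k - 1)) (geometricStrategy b m k r) i x := by
  refine ⟨n, by rw [hn], by rwa [hn], ?_⟩
  have hbk : 0 < b ^ k - 1 := sub_pos.2 (one_lt_pow₀ hb (NeZero.ne k))
  have h_sum := sub_one_mul_sum_range_le (t := fun j ↦ (geometricStrategy b m k r j).2)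
    (zero_le_one.trans (one_le_geometricStrategy hb.le r 0))
    (geometricStrategy_succ (zero_lt_one.trans hb) r) n
  simp only [hn] at h_sum
  rw [div_mul_eq_mul_div, le_div_iff₀' hbk]
  exact h_sum.trans hyx

lemma exists_geometricStrategy_eq [NeZero k] (b : ℝ) {a u : ℤ} (h : 0 ≤ k * a + m * u) :
    ∃ n, geometricStrategy b m k (u : ZMod k) n = ((a : ZMod m), b ^ (k * a + m * u)) := by
  have hk : (0 : ℤ) < k := by exact_mod_cast NeZero.pos k
  set v : ℤ := ((u : ZMod k).val : ℤ)
  have h_val : v + k * (u / k) = u := by simp only [v, ZMod.val_intCast, Int.emod_add_mul_ediv]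
  have h_exponent : k * a + m * u = m * v + k * (a + m * (u / k)) := by
    linear_combination -(m : ℤ) * h_val
  obtain ⟨n, hn⟩ := Int.eq_ofNat_of_zero_le (Int.ediv_nonneg h hk.le)
  have h_index : (n : ℤ) - m * v / k = a + m * (u / k) := by
    rw [← hn, h_exponent, Int.add_mul_ediv_left _ _ hk.ne', add_sub_cancel_left]
  refine ⟨n, Prod.ext ?_ ?_⟩
  · simp only [geometricStrategy, v, h_index]
    simp
  · simp only [geometricStrategy, v, h_index]
    rw [h_exponent, add_comm]

lemma isRaySearch_geometricStrategy [NeZero m] [NeZero k] (hb : 1 < b) {s : ℕ} (hs : s ≤ k) :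
    IsRaySearch s (b ^ (m * s) / (b ^ k - 1)) (geometricStrategy b m k) := by
  refine ⟨one_le_geometricStrategy hb.le, fun i x hx ↦ ?_⟩
  obtain ⟨a, rfl⟩ := ZMod.intCast_surjective i
  have hm : (0 : ℤ) < m := by exact_mod_cast NeZero.pos m
  obtain ⟨e, hex, hxe⟩ := exists_mem_Ico_zpow (zero_lt_one.trans_le hx) hb
  obtain ⟨u, ⟨hu, hu'⟩, -⟩ := existsUnique_add_zsmul_mem_Ioc hm (k * a) e
  rw [smul_eq_mul, mul_comm u] at hu hu'
  have he : 0 < e + 1 := (one_lt_zpow_iff_right₀ hb).1 (hx.trans_lt hxe)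
  have h_inj : Set.InjOn (fun j : ℕ ↦ ((u + j : ℤ) : ZMod k)) (range s) := fun j hj j' hj' h ↦
    CharP.natCast_injOn_Iio (ZMod k) k ((mem_range.1 hj).trans_le hs)
      ((mem_range.1 hj').trans_le hs) (by simpa using h)
  have h_card : ((fun j : ℕ ↦ ((u + j : ℤ) : ZMod k)) '' range s).ncard = s := by
    rw [h_inj.ncard_image, Set.ncard_coe_finset, card_range]
  refine h_card.ge.trans (Set.ncard_le_ncard ?_ (Set.toFinite _))
  rintro _ ⟨j, hj, rfl⟩
  have hj_nonneg : (0 : ℤ) ≤ m * j := by positivity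
  have hj_lt : (m : ℤ) * (j + 1) ≤ m * s := by
    gcongr
    exact_mod_cast mem_range.1 hj
  have h_lower : e + 1 ≤ k * a + m * (u + j) := by linarith
  have h_upper : k * a + m * (u + j) ≤ (m * s : ℕ) + e := by push_cast; linarith
  obtain ⟨n, hn⟩ := exists_geometricStrategy_eq b (he.le.trans h_lower)
  refine coversPoint_geometricStrategy hb hn (hxe.le.trans (zpow_le_zpow_right₀ hb.le h_lower)) ?_
  calc b ^ (k * a + m * (u + j)) ≤ b ^ (((m * s : ℕ) : ℤ) + e) := zpow_le_zpow_right₀ hb.le h_upper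
    _ = b ^ (m * s) * b ^ e := by rw [zpow_add₀ (by positivity), zpow_natCast]
    _ ≤ b ^ (m * s) * x := by gcongr

lemma IsRaySearch.reindex {ι' ρ' : Type*} {s : ℕ} {μ : ℝ} {σ : ρ → ℕ → ι × ℝ}
    (hσ : IsRaySearch s μ σ) (eι : ι ≃ ι') (eρ : ρ' ≃ ρ) :
    IsRaySearch s μ fun r j ↦ (eι (σ (eρ r) j).1, (σ (eρ r) j).2) := by
  refine ⟨fun r j ↦ hσ.1 (eρ r) j, fun i x hx ↦ ?_⟩
  have h_preimage : {r | CoversPoint μ (fun j ↦ (eι (σ (eρ r) j).1, (σ (eρ r) j).2)) i x} =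
      eρ ⁻¹' {r | CoversPoint μ (σ r) (eι.symm i) x} := by
    ext r
    simp [CoversPoint, eι.eq_symm_apply]
  rw [h_preimage, Set.ncard_preimage_of_injective_subset_range eρ.injective (by simp)]
  exact hσ.2 _ x hx

theorem exists_isRaySearch_optimalOverhead [Fintype ι] [Fintype ρ] {s : ℕ}
    (hs : s ≤ card ρ) (hρι : card ρ < card ι * s) :
    ∃ σ : ρ → ℕ → ι × ℝ, IsRaySearch s (optimalOverhead (card ι * s) (card ρ)) σ := by
  have hρ : 0 < card ρ := (Nat.pos_of_mul_pos_left (Nat.zero_lt_of_lt hρι)).trans_le hs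
  have : NeZero (card ρ) := ⟨hρ.ne'⟩
  have : NeZero (card ι) := ⟨(Nat.pos_of_mul_pos_right (hρ.trans hρι)).ne'⟩
  obtain ⟨b, hb, hb_eq⟩ := exists_base_eq_optimalOverhead hρ hρι
  rw [← hb_eq]
  exact ⟨_, (isRaySearch_geometricStrategy hb hs).reindex
    (Fintype.equivOfCardEq (ZMod.card _)) (Fintype.equivOfCardEq (ZMod.card _).symm)⟩

end UpperBound

/-- The optimal competitive ratio `A(m,k,f)` for searching `m` rays with `k`
robots, `f` of which are faulty of crash type, equals
`λ₀ = 2 (q^q/((q-k)^(q-k) k^k))^(1/k) + 1` with `q = m(f+1)`.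
A round strategy is a sequence `σ : ℕ → Fin m × ℝ`: in round `j` the robot goes
to distance `(σ j).2 ≥ 1` along ray `(σ j).1` and back; a point at distance `x`
on ray `i` is `λ`-covered by the robot if in some round `j` we have
`(σ j).1 = i`, `x ≤ (σ j).2` and the sum of previous turning distances is at
most `((λ-1)/2)·x`. -/
theorem m_ray_search_crash_competitive_ratio
    (m k f : ℕ) (hfk : f < k) (hk : k < m * (f + 1)) :
    sInf {lam : ℝ | 1 < lam ∧
        ∃ σ : Fin k → ℕ → Fin m × ℝ,
          (∀ r j, 1 ≤ (σ r j).2) ∧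
          ∀ (i : Fin m) (x : ℝ), 1 ≤ x →
            f + 1 ≤ {r : Fin k | ∃ j : ℕ, (σ r j).1 = i ∧ x ≤ (σ r j).2 ∧
                  (∑ l ∈ Finset.range j, (σ r l).2) ≤ ((lam - 1) / 2) * x}.ncard}
      = 2 * (((m * (f + 1) : ℕ) : ℝ) ^ (m * (f + 1)) /
            (((m * (f + 1) - k : ℕ) : ℝ) ^ (m * (f + 1) - k) * (k : ℝ) ^ k))
            ^ ((1 : ℝ) / k) + 1 := by
  have hk₀ : 0 < card (Fin k) := by simpa using Nat.zero_lt_of_lt hfk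
  have hkq : card (Fin k) < card (Fin m) * (f + 1) := by simpa using hk
  obtain ⟨σ, hσ⟩ := exists_isRaySearch_optimalOverhead (ι := Fin m) (by simpa using hfk) hkq
  have h_pos := optimalOverhead_pos hk₀ hkq
  simp only [Fintype.card_fin] at hσ h_pos
  refine IsLeast.csInf_eq (a := 2 * optimalOverhead (m * (f + 1)) k + 1)
    ⟨⟨by linarith, σ, ?_⟩, ?_⟩
  · rw [add_sub_cancel_right, mul_div_cancel_left₀ _ two_ne_zero]
    exact hσ
  · rintro lam ⟨hlam, σ', hσ' : IsRaySearch (f + 1) ((lam - 1) / 2) σ'⟩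
    have h_le := hσ'.optimalOverhead_le (by linarith) hk₀ hkq
    simp only [Fintype.card_fin] at h_le
    linarith
end

section
/- Let η > 1 be a real number. Define C(η) as the infimum, over all n ∈ ℕ, all weight vectors w_1, …, w_n > 0 with w_1 + ⋯ + w_n = 1, and all ORC strategies t^{(1)}, …, t^{(n)}, of the set of λ > 1 such that for every x ≥ 1 one has Σ_{i=1}^n w_i · (number of rounds j with x ≤ t^{(i)}_j and ((λ-1)/2)·x ≥ t^{(i)}_1 + ⋯ + t^{(i)}_{j-1}) ≥ η. Then C(η) = 2·η^η/(η-1)^{η-1} + 1. -/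
/-!
With travel budget `μ = (λ - 1) / 2`, a round with turning point `T`, preceded by turning points of
sum `S`, covers exactly the points of `[S / μ, T]`, an interval of logarithmic length
`log (μ T / S)`.

Lower bound: if `μ ≤ p ^ p / (p - 1) ^ (p - 1)`, weighted AM-GM gives `μ (r - 1) ≤ r ^ p`; at
`r = (S + T) / S` this bounds the logarithmic length by `p (log (S + T) - log S)`. These bounds
telescope and, with turning points cut off at `exp U`, the rounds relevant to `[1, exp U]` never
push the total beyond `(μ + 1) exp U`, so each robot covers logarithmic length at most
`p (U + log (μ + 1))`. Averaging over the robots and letting `U → ∞` yields `η ≤ p`.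

Upper bound: AM-GM is tight at `r = η / (η - 1)`. Taking `b` to be this ratio, `n` robots of equal
weight share the turning points `b ^ (m / n)`, robot `i` using those with `m ≡ i` modulo `n`. As
`S ≤ T / (b - 1)`, all `m` with `x ≤ b ^ (m / n) ≤ μ (b - 1) x` cover `x`, and for large `n` there
are at least `n η` of them because `b ^ η < μ (b - 1)`.
-/

namespace FractionalORC

open MeasureTheory Set

/-- The value of the travel budget `μ = (λ - 1) / 2` at the optimal ratio `λ = C(η)`. -/
noncomputable def criticalBudget (η : ℝ) : ℝ := η ^ η / (η - 1) ^ (η - 1)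

/-- The rounds in which a robot with turning points `t` covers `x`; here `μ` stands for
`(λ - 1) / 2`, and rounds are numbered from `0`. -/
def coveringRounds (t : ℕ → ℝ) (μ x : ℝ) : Set ℕ :=
  {j | x ≤ t j ∧ ∑ l ∈ Finset.range j, t l ≤ μ * x}

/-- Robots with weights `w` and strategies `t` cover every `x ≥ 1` with total weight at least `η`,
counting each covering round separately. -/
def Covers {ι : Type*} [Fintype ι] (η μ : ℝ) (w : ι → ℝ) (t : ι → ℕ → ℝ) : Prop :=
  ∀ x : ℝ, 1 ≤ x → η ≤ ∑ i, w i * ((coveringRounds (t i) μ x).ncard : ℝ)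

/-- Covering weight `η` is attainable with travel budget `μ = (λ - 1) / 2`. -/
def Feasible (η μ : ℝ) : Prop :=
  ∃ (n : ℕ) (w : Fin n → ℝ) (t : Fin n → ℕ → ℝ),
    (∀ i, 0 < w i) ∧ ∑ i, w i = 1 ∧ (∀ i j, 1 ≤ t i j) ∧ Covers η μ w t

section CriticalBudget

variable {p : ℝ}

lemma criticalBudget_pos (hp : 1 < p) : 0 < criticalBudget p :=
  div_pos (Real.rpow_pos_of_pos (by linarith) _) (Real.rpow_pos_of_pos (by linarith) _)

lemma continuousAt_criticalBudget (hp : 1 < p) : ContinuousAt criticalBudget p := by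
  have hp' : 0 < p - 1 := by linarith
  refine ContinuousAt.div (continuousAt_id.rpow continuousAt_id (Or.inl ?_))
    (ContinuousAt.rpow (by fun_prop) (by fun_prop) (Or.inl hp'.ne'))
    (Real.rpow_pos_of_pos hp' _).ne'
  exact (zero_lt_one.trans hp).ne'

lemma criticalBudget_eq_mul_rpow (hp : 1 < p) :
    criticalBudget p = p * (p / (p - 1)) ^ (p - 1) := by
  have hp0 : 0 < p := by linarith
  rw [criticalBudget, Real.div_rpow hp0.le (by linarith), Real.rpow_sub_one hp0.ne']
  field_simp

lemma criticalBudget_mul_sub_one_le_rpow (hp : 1 < p) {r : ℝ} (hr : 1 ≤ r) :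
    criticalBudget p * (r - 1) ≤ r ^ p := by
  have hp0 : 0 < p := by linarith
  have hp1 : 0 < p - 1 := by linarith
  have hr1 : 0 ≤ r - 1 := by linarith
  have amgm : (p * (r - 1)) ^ (1 / p) * (p / (p - 1)) ^ ((p - 1) / p) ≤ r := by
    refine (Real.geom_mean_le_arith_mean2_weighted (by positivity) (by positivity)
      (mul_nonneg hp0.le hr1) (by positivity) (by field_simp; ring)).trans_eq ?_
    field_simp
    ring
  calc criticalBudget p * (r - 1)
      = p * (r - 1) * (p / (p - 1)) ^ (p - 1) := by rw [criticalBudget_eq_mul_rpow hp]; ring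
    _ = ((p * (r - 1)) ^ (1 / p) * (p / (p - 1)) ^ ((p - 1) / p)) ^ p := by
        rw [Real.mul_rpow (by positivity) (by positivity), ← Real.rpow_mul (by positivity),
          ← Real.rpow_mul (by positivity), div_mul_cancel₀ _ hp0.ne', div_mul_cancel₀ _ hp0.ne',
          Real.rpow_one]
    _ ≤ r ^ p := Real.rpow_le_rpow (by positivity) amgm hp0.le

lemma criticalBudget_mul_div_sub_one (hp : 1 < p) :
    criticalBudget p * (p / (p - 1) - 1) = (p / (p - 1)) ^ p := by
  have hp1 : 0 < p - 1 := by linarith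
  have hb : p / (p - 1) ≠ 0 := by positivity
  rw [criticalBudget_eq_mul_rpow hp, Real.rpow_sub_one hb]
  field_simp
  ring

lemma log_sub_log_div_le (hp : 1 < p) {μ S T : ℝ} (hμ : 0 < μ) (hμp : μ ≤ criticalBudget p)
    (hS : 0 < S) (hT : 0 < T) :
    Real.log T - Real.log (S / μ) ≤ p * (Real.log (S + T) - Real.log S) := by
  have ratio_sub_one : (S + T) / S - 1 = T / S := by field_simp; ring
  have hr : 1 ≤ (S + T) / S := by rw [one_le_div hS]; linarith
  have key : T / (S / μ) ≤ ((S + T) / S) ^ p :=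
    calc T / (S / μ) = μ * ((S + T) / S - 1) := by rw [ratio_sub_one]; field_simp
      _ ≤ criticalBudget p * ((S + T) / S - 1) :=
        mul_le_mul_of_nonneg_right hμp (by linarith)
      _ ≤ ((S + T) / S) ^ p := criticalBudget_mul_sub_one_le_rpow hp hr
  rw [← Real.log_div hT.ne' (by positivity), ← Real.log_div (by positivity) hS.ne',
    ← Real.log_rpow (by positivity)]
  exact Real.log_le_log (by positivity) key

end CriticalBudget

section CoveringRounds

variable {t : ℕ → ℝ} {μ U : ℝ}

lemma natCast_le_sum_range (ht : ∀ j, 1 ≤ t j) (j : ℕ) :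
    (j : ℝ) ≤ ∑ l ∈ Finset.range j, t l := by
  simpa using Finset.card_nsmul_le_sum (Finset.range j) t 1 fun l _ ↦ ht l

lemma one_le_sum_range (ht : ∀ j, 1 ≤ t j) {j : ℕ} (hj : 0 < j) :
    1 ≤ ∑ l ∈ Finset.range j, t l :=
  (Nat.one_le_cast.2 hj).trans (natCast_le_sum_range ht j)

lemma coveringRounds_subset_Iic (ht : ∀ j, 1 ≤ t j) (x : ℝ) :
    coveringRounds t μ x ⊆ Iic ⌊μ * x⌋₊ :=
  fun j hj ↦ Nat.le_floor ((natCast_le_sum_range ht j).trans hj.2)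

/-- The logarithms of the points of `[1, exp U]` covered in round `j`. -/
def coveredLogs (t : ℕ → ℝ) (μ U : ℝ) (j : ℕ) : Set ℝ :=
  {u ∈ Icc 0 U | j ∈ coveringRounds t μ (Real.exp u)}

lemma measurableSet_coveredLogs (j : ℕ) : MeasurableSet (coveredLogs t μ U j) :=
  measurableSet_Icc.inter <|
    (measurableSet_le Real.measurable_exp measurable_const).inter
      (measurableSet_le measurable_const (Real.measurable_exp.const_mul μ))

lemma le_log_of_mem_coveredLogs {j : ℕ} {u : ℝ} (hu : u ∈ coveredLogs t μ U j) :
    u ≤ Real.log (min (t j) (Real.exp U)) := by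
  have h : Real.exp u ≤ min (t j) (Real.exp U) := le_min hu.2.1 (Real.exp_le_exp.2 hu.1.2)
  exact (Real.le_log_iff_exp_le ((Real.exp_pos u).trans_le h)).2 h

lemma log_le_of_mem_coveredLogs (hμ : 0 < μ) {j : ℕ} (hS : 0 < ∑ l ∈ Finset.range j, t l)
    {u : ℝ} (hu : u ∈ coveredLogs t μ U j) :
    Real.log ((∑ l ∈ Finset.range j, t l) / μ) ≤ u := by
  rw [Real.log_le_iff_le_exp (div_pos hS hμ), div_le_iff₀' hμ]
  exact hu.2.2

/-- The potential of the lower-bound argument: the logarithm of the sum of the turning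
points before round `j`, truncated at `B`. Its initial value is `Real.log 0 = 0`, which makes the
bound on later rounds valid for round `0` as well. -/
noncomputable def logTotal (t : ℕ → ℝ) (B : ℝ) (j : ℕ) : ℝ :=
  Real.log (min (∑ l ∈ Finset.range j, t l) B)

lemma logTotal_zero {B : ℝ} (hB : 0 ≤ B) : logTotal t B 0 = 0 := by
  rw [logTotal, Finset.sum_range_zero, min_eq_left hB, Real.log_zero]

lemma logTotal_mono (ht : ∀ j, 1 ≤ t j) {B : ℝ} (hB : 1 ≤ B) : Monotone (logTotal t B) := by
  refine monotone_nat_of_le_succ fun j ↦ ?_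
  rcases j.eq_zero_or_pos with rfl | hj
  · rw [logTotal_zero (by linarith)]
    exact Real.log_nonneg (le_min (one_le_sum_range ht Nat.one_pos) hB)
  · refine Real.log_le_log (lt_min (by linarith [one_le_sum_range ht hj]) (by linarith))
      (min_le_min_right _ ?_)
    rw [Finset.sum_range_succ]
    linarith [ht j]

lemma logTotal_le (ht : ∀ j, 1 ≤ t j) {B : ℝ} (hB : 1 ≤ B) (j : ℕ) :
    logTotal t B j ≤ Real.log B := by
  refine (logTotal_mono ht hB j.le_succ).trans (Real.log_le_log ?_ (min_le_right _ _))
  exact lt_min (by linarith [one_le_sum_range ht j.succ_pos]) (by linarith)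

lemma volume_coveredLogs_zero_le (ht : ∀ j, 1 ≤ t j) (hμ : 0 ≤ μ) (hU : 0 ≤ U) :
    volume.real (coveredLogs t μ U 0) ≤ logTotal t ((μ + 1) * Real.exp U) 1 := by
  have hX : 1 ≤ Real.exp U := Real.one_le_exp hU
  have hlog : 0 ≤ Real.log (min (t 0) (Real.exp U)) := Real.log_nonneg (le_min (ht 0) hX)
  have hsub : coveredLogs t μ U 0 ⊆ Icc 0 (Real.log (min (t 0) (Real.exp U))) :=
    fun u hu ↦ ⟨hu.1.1, le_log_of_mem_coveredLogs hu⟩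
  calc volume.real (coveredLogs t μ U 0)
      ≤ volume.real (Icc 0 (Real.log (min (t 0) (Real.exp U)))) :=
        measureReal_mono hsub measure_Icc_lt_top.ne
    _ = Real.log (min (t 0) (Real.exp U)) := by
        rw [Real.volume_real_Icc_of_le hlog, sub_zero]
    _ ≤ logTotal t ((μ + 1) * Real.exp U) 1 := by
        rw [logTotal, Finset.sum_range_one]
        refine Real.log_le_log (lt_min (by linarith [ht 0]) (by linarith)) (min_le_min_left _ ?_)
        nlinarith

lemma volume_coveredLogs_le_of_nonempty {p : ℝ} (hp : 1 < p) (hμ : 0 < μ)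
    (hμp : μ ≤ criticalBudget p) (ht : ∀ j, 1 ≤ t j) {j : ℕ} (hj : 0 < j)
    (hne : (coveredLogs t μ U j).Nonempty) :
    volume.real (coveredLogs t μ U j) ≤
      p * (logTotal t ((μ + 1) * Real.exp U) (j + 1) - logTotal t ((μ + 1) * Real.exp U) j) := by
  set S := ∑ l ∈ Finset.range j, t l with hS
  set T := min (t j) (Real.exp U)
  have hS0 : 0 < S := by linarith [one_le_sum_range ht hj]
  have hT0 : 0 < T := lt_min (by linarith [ht j]) (Real.exp_pos U)
  obtain ⟨u, hu⟩ := hne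
  have S_le : S ≤ μ * Real.exp U :=
    hu.2.2.trans (mul_le_mul_of_nonneg_left (Real.exp_le_exp.2 hu.1.2) hμ.le)
  have hsub : coveredLogs t μ U j ⊆ Icc (Real.log (S / μ)) (Real.log T) :=
    fun v hv ↦ ⟨log_le_of_mem_coveredLogs hμ hS0 hv, le_log_of_mem_coveredLogs hv⟩
  have endpoints : Real.log (S / μ) ≤ Real.log T := (hsub hu).1.trans (hsub hu).2
  have logTotal_eq : logTotal t ((μ + 1) * Real.exp U) j = Real.log S := by
    rw [logTotal, ← hS, min_eq_left]
    linarith [Real.exp_pos U]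
  have le_logTotal_succ : Real.log (S + T) ≤ logTotal t ((μ + 1) * Real.exp U) (j + 1) := by
    rw [logTotal, Finset.sum_range_succ, ← hS]
    refine Real.log_le_log (by positivity) (le_min ?_ ?_)
    · exact add_le_add_right (min_le_left _ _) S
    · linarith [min_le_right (t j) (Real.exp U)]
  calc volume.real (coveredLogs t μ U j)
      ≤ volume.real (Icc (Real.log (S / μ)) (Real.log T)) :=
        measureReal_mono hsub measure_Icc_lt_top.ne
    _ = Real.log T - Real.log (S / μ) := Real.volume_real_Icc_of_le endpoints
    _ ≤ p * (Real.log (S + T) - Real.log S) := log_sub_log_div_le hp hμ hμp hS0 hT0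
    _ ≤ _ := by
        rw [logTotal_eq]
        exact mul_le_mul_of_nonneg_left (by linarith) (by linarith)

lemma volume_coveredLogs_le {p : ℝ} (hp : 1 < p) (hμ : 0 < μ) (hμp : μ ≤ criticalBudget p)
    (ht : ∀ j, 1 ≤ t j) (hU : 0 ≤ U) (j : ℕ) :
    volume.real (coveredLogs t μ U j) ≤
      p * (logTotal t ((μ + 1) * Real.exp U) (j + 1) - logTotal t ((μ + 1) * Real.exp U) j) := by
  have hB : 1 ≤ (μ + 1) * Real.exp U := one_le_mul_of_one_le_of_one_le (by linarith)
    (Real.one_le_exp hU)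
  have increment_nonneg := sub_nonneg.2 (logTotal_mono ht hB j.le_succ)
  rcases j.eq_zero_or_pos with rfl | hj
  · refine (volume_coveredLogs_zero_le ht hμ.le hU).trans ?_
    rw [logTotal_zero (by linarith), sub_zero] at increment_nonneg ⊢
    exact le_mul_of_one_le_left increment_nonneg hp.le
  rcases (coveredLogs t μ U j).eq_empty_or_nonempty with hempty | hne
  · rw [hempty, measureReal_empty]
    exact mul_nonneg (by linarith) increment_nonneg
  · exact volume_coveredLogs_le_of_nonempty hp hμ hμp ht hj hne

lemma ncard_coveringRounds_eq_sum_indicator (ht : ∀ j, 1 ≤ t j) (hμ : 0 ≤ μ) {u : ℝ}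
    (hu : u ∈ Icc 0 U) :
    ((coveringRounds t μ (Real.exp u)).ncard : ℝ) =
      ∑ j ∈ Finset.range (⌊μ * Real.exp U⌋₊ + 1),
        (coveredLogs t μ U j).indicator (fun _ ↦ (1 : ℝ)) u := by
  classical
  have hrounds : coveringRounds t μ (Real.exp u) =
      ((Finset.range (⌊μ * Real.exp U⌋₊ + 1)).filter (u ∈ coveredLogs t μ U ·) : Finset ℕ) := by
    ext j
    rw [Finset.coe_filter, mem_ofPred_eq, Finset.mem_range_succ_iff]
    refine ⟨fun hj ↦ ⟨?_, hu, hj⟩, fun hj ↦ hj.2.2⟩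
    refine (coveringRounds_subset_Iic ht _ hj).trans (Nat.floor_le_floor ?_)
    exact mul_le_mul_of_nonneg_left (Real.exp_le_exp.2 hu.2) hμ
  rw [hrounds, ncard_coe_finset]
  simp only [indicator_apply, Finset.sum_boole]

lemma integrableOn_indicator_coveredLogs (j : ℕ) :
    IntegrableOn ((coveredLogs t μ U j).indicator fun _ ↦ (1 : ℝ)) (Icc 0 U) :=
  (integrableOn_const measure_Icc_lt_top.ne).indicator (measurableSet_coveredLogs j)

lemma integrableOn_ncard_coveringRounds (ht : ∀ j, 1 ≤ t j) (hμ : 0 ≤ μ) :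
    IntegrableOn (fun u ↦ ((coveringRounds t μ (Real.exp u)).ncard : ℝ)) (Icc 0 U) := by
  refine IntegrableOn.congr_fun ?_
    (fun u hu ↦ (ncard_coveringRounds_eq_sum_indicator ht hμ hu).symm) measurableSet_Icc
  exact integrable_finsetSum _ fun j _ ↦ integrableOn_indicator_coveredLogs j

lemma integral_ncard_coveringRounds_le {p : ℝ} (hp : 1 < p) (hμ : 0 < μ)
    (hμp : μ ≤ criticalBudget p) (ht : ∀ j, 1 ≤ t j) (hU : 0 ≤ U) :
    ∫ u in Icc 0 U, ((coveringRounds t μ (Real.exp u)).ncard : ℝ) ≤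
      p * (Real.log (μ + 1) + U) := by
  set N := ⌊μ * Real.exp U⌋₊ + 1
  set B := (μ + 1) * Real.exp U
  have hB : 1 ≤ B := one_le_mul_of_one_le_of_one_le (by linarith) (Real.one_le_exp hU)
  calc ∫ u in Icc 0 U, ((coveringRounds t μ (Real.exp u)).ncard : ℝ)
      = ∫ u in Icc 0 U, ∑ j ∈ Finset.range N, (coveredLogs t μ U j).indicator (fun _ ↦ (1 : ℝ)) u :=
        setIntegral_congr_fun measurableSet_Icc
          fun u hu ↦ ncard_coveringRounds_eq_sum_indicator ht hμ.le hu
    _ = ∑ j ∈ Finset.range N, volume.real (coveredLogs t μ U j) := by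
        rw [integral_finsetSum _ fun j _ ↦ integrableOn_indicator_coveredLogs j]
        refine Finset.sum_congr rfl fun j _ ↦ ?_
        rw [setIntegral_indicator (measurableSet_coveredLogs j),
          inter_eq_right.2 fun u hu ↦ hu.1, setIntegral_const, smul_eq_mul, mul_one]
    _ ≤ ∑ j ∈ Finset.range N, p * (logTotal t B (j + 1) - logTotal t B j) :=
        Finset.sum_le_sum fun j _ ↦ volume_coveredLogs_le hp hμ hμp ht hU j
    _ = p * logTotal t B N := by
        rw [← Finset.mul_sum, Finset.sum_range_sub, logTotal_zero (by linarith), sub_zero]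
    _ ≤ p * Real.log B := mul_le_mul_of_nonneg_left (logTotal_le ht hB N) (by linarith)
    _ = p * (Real.log (μ + 1) + U) := by
        rw [Real.log_mul (by linarith) (Real.exp_ne_zero U), Real.log_exp]

end CoveringRounds

section LowerBound

variable {ι : Type*} [Fintype ι] {η μ p : ℝ} {w : ι → ℝ} {t : ι → ℕ → ℝ}

lemma Covers.mul_le (hcov : Covers η μ w t) (hw : ∀ i, 0 ≤ w i) (hw1 : ∑ i, w i = 1)
    (ht : ∀ i j, 1 ≤ t i j) (hp : 1 < p) (hμ : 0 < μ) (hμp : μ ≤ criticalBudget p)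
    {U : ℝ} (hU : 0 ≤ U) : η * U ≤ p * (Real.log (μ + 1) + U) := by
  have hint (i : ι) :
      IntegrableOn (fun u ↦ w i * ((coveringRounds (t i) μ (Real.exp u)).ncard : ℝ)) (Icc 0 U) :=
    (integrableOn_ncard_coveringRounds (ht i) hμ.le).const_mul (w i)
  calc η * U = ∫ _ in Icc 0 U, η := by
        rw [setIntegral_const, Real.volume_real_Icc_of_le hU, smul_eq_mul, sub_zero, mul_comm]
    _ ≤ ∫ u in Icc 0 U, ∑ i, w i * ((coveringRounds (t i) μ (Real.exp u)).ncard : ℝ) :=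
        setIntegral_mono_on (integrableOn_const measure_Icc_lt_top.ne)
          (integrable_finsetSum _ fun i _ ↦ hint i) measurableSet_Icc
          fun u hu ↦ hcov _ (Real.one_le_exp hu.1)
    _ = ∑ i, w i * ∫ u in Icc 0 U, ((coveringRounds (t i) μ (Real.exp u)).ncard : ℝ) := by
        rw [integral_finsetSum _ fun i _ ↦ hint i]
        simp only [integral_const_mul]
    _ ≤ ∑ i, w i * (p * (Real.log (μ + 1) + U)) :=
        Finset.sum_le_sum fun i _ ↦ mul_le_mul_of_nonneg_left
          (integral_ncard_coveringRounds_le hp hμ hμp (ht i) hU) (hw i)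
    _ = p * (Real.log (μ + 1) + U) := by rw [← Finset.sum_mul, hw1, one_mul]

lemma Covers.le_of_le_criticalBudget (hcov : Covers η μ w t) (hw : ∀ i, 0 ≤ w i)
    (hw1 : ∑ i, w i = 1) (ht : ∀ i j, 1 ≤ t i j) (hp : 1 < p) (hμ : 0 < μ)
    (hμp : μ ≤ criticalBudget p) : η ≤ p := by
  by_contra! hlt
  have hgap : 0 < η - p := sub_pos.2 hlt
  have hlog : 0 < Real.log (μ + 1) := Real.log_pos (by linarith)
  have hU : 0 ≤ (p * Real.log (μ + 1) + 1) / (η - p) := by positivity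
  have hbound := hcov.mul_le hw hw1 ht hp hμ hμp hU
  have hcancel : (η - p) * ((p * Real.log (μ + 1) + 1) / (η - p)) = p * Real.log (μ + 1) + 1 :=
    mul_div_cancel₀ _ hgap.ne'
  linarith

lemma Feasible.criticalBudget_le (hη : 1 < η) (hμ : 0 < μ) (h : Feasible η μ) :
    criticalBudget η ≤ μ := by
  obtain ⟨n, w, t, hw, hw1, ht, hcov⟩ := h
  by_contra! hlt
  have hnear : ∀ᶠ p in nhdsWithin η (Iio η), μ < criticalBudget p ∧ 1 < p :=
    (((continuousAt_criticalBudget hη).eventually (lt_mem_nhds hlt)).and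
      (lt_mem_nhds hη)).filter_mono nhdsWithin_le_nhds
  obtain ⟨p, ⟨hμp, hp⟩, hpη⟩ := (hnear.and self_mem_nhdsWithin).exists
  exact hpη.not_ge (hcov.le_of_le_criticalBudget (fun i ↦ (hw i).le) hw1 ht hp hμ hμp.le)

end LowerBound

section UpperBound

variable {b μ : ℝ} {n : ℕ}

/-- The turning points of robot `i` out of `n`: those powers `b ^ (m / n)` for which `m` is
congruent to `i` modulo `n`. -/
noncomputable def geomStrategy (b : ℝ) (n i j : ℕ) : ℝ := b ^ (((j * n + i : ℕ) : ℝ) / n)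

lemma one_le_geomStrategy (hb : 1 ≤ b) (i j : ℕ) : 1 ≤ geomStrategy b n i j :=
  Real.one_le_rpow hb (by positivity)

lemma geomStrategy_eq_mul_pow (hb : 0 < b) (hn : n ≠ 0) (i j : ℕ) :
    geomStrategy b n i j = b ^ ((i : ℝ) / n) * b ^ j := by
  have hexp : ((j * n + i : ℕ) : ℝ) / n = i / n + j := by
    push_cast
    field_simp
    ring
  rw [geomStrategy, hexp, Real.rpow_add hb, Real.rpow_natCast]

lemma sum_geomStrategy_mul_le (hb : 0 < b) (hn : n ≠ 0) (i j : ℕ) :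
    (∑ l ∈ Finset.range j, geomStrategy b n i l) * (b - 1) ≤ geomStrategy b n i j := by
  simp only [geomStrategy_eq_mul_pow hb hn, ← Finset.mul_sum]
  rw [mul_assoc, geom_sum_mul]
  exact mul_le_mul_of_nonneg_left (by linarith) (by positivity)

lemma mem_coveringRounds_geomStrategy (hb : 1 < b) (hn : n ≠ 0) {e L : ℝ}
    (he : b ^ e = μ * (b - 1)) {i j : ℕ} (hlow : n * L ≤ (j * n + i : ℕ))
    (hhigh : ((j * n + i : ℕ) : ℝ) ≤ n * (L + e)) :
    j ∈ coveringRounds (geomStrategy b n i) μ (b ^ L) := by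
  have hn0 : (0 : ℝ) < n := Nat.cast_pos.2 (Nat.pos_of_ne_zero hn)
  refine ⟨Real.rpow_le_rpow_of_exponent_le hb.le ((le_div_iff₀' hn0).2 hlow), ?_⟩
  refine le_of_mul_le_mul_right ?_ (sub_pos.2 hb)
  calc (∑ l ∈ Finset.range j, geomStrategy b n i l) * (b - 1)
      ≤ geomStrategy b n i j := sum_geomStrategy_mul_le (by linarith) hn i j
    _ ≤ b ^ (L + e) := Real.rpow_le_rpow_of_exponent_le hb.le ((div_le_iff₀' hn0).2 hhigh)
    _ = μ * b ^ L * (b - 1) := by rw [Real.rpow_add (by linarith), he]; ring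

lemma sum_ncard_residue_eq_card [NeZero n] (s : Finset ℕ) :
    ∑ i : Fin n, {j : ℕ | j * n + i ∈ s}.ncard = s.card := by
  rw [Finset.card_eq_sum_card_fiberwise (f := Fin.ofNat n) fun _ _ ↦ Finset.mem_coe.2
    (Finset.mem_univ _)]
  refine Finset.sum_congr rfl fun i _ ↦ ?_
  have hinj : Function.Injective fun j : ℕ ↦ j * n + i :=
    fun j k h ↦ Nat.eq_of_mul_eq_mul_right (NeZero.pos n) (Nat.add_right_cancel h)
  have himage : (fun j : ℕ ↦ j * n + i) '' {j : ℕ | j * n + i ∈ s} =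
      (s.filter (Fin.ofNat n · = i) : Finset ℕ) := by
    ext m
    rw [Finset.coe_filter]
    constructor
    · rintro ⟨j, hj, rfl⟩
      exact ⟨hj, Fin.ext (Nat.mul_add_mod_of_lt i.is_lt)⟩
    · rintro ⟨hm, rfl⟩
      have hdiv : m / n * n + (Fin.ofNat n m : ℕ) = m := Nat.div_add_mod' m n
      exact ⟨m / n, by rwa [mem_ofPred_eq, hdiv], hdiv⟩
  rw [← ncard_image_of_injective _ hinj, himage, ncard_coe_finset]

lemma sub_sub_one_le_card_Icc_ceil_floor {a : ℝ} (ha : 0 ≤ a) (c : ℝ) :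
    c - a - 1 ≤ (Finset.Icc ⌈a⌉₊ ⌊c⌋₊).card := by
  have hcard : ⌊c⌋₊ + 1 ≤ (Finset.Icc ⌈a⌉₊ ⌊c⌋₊).card + ⌈a⌉₊ := by
    rw [Nat.card_Icc]
    exact Nat.sub_le_iff_le_add.1 le_rfl
  have hcard' : (⌊c⌋₊ : ℝ) + 1 ≤ (Finset.Icc ⌈a⌉₊ ⌊c⌋₊).card + ⌈a⌉₊ := by exact_mod_cast hcard
  linarith [Nat.ceil_lt_add_one ha, Nat.lt_floor_add_one c]

lemma le_sum_ncard_coveringRounds_geomStrategy [NeZero n] (hb : 1 < b) {e x : ℝ} (he0 : 0 ≤ e)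
    (he : b ^ e = μ * (b - 1)) (hx : 1 ≤ x) :
    n * e - 1 ≤ ∑ i : Fin n, ((coveringRounds (geomStrategy b n i) μ x).ncard : ℝ) := by
  set L := Real.logb b x
  have hbL : b ^ L = x := Real.rpow_logb (by linarith) hb.ne' (by linarith)
  have hL : 0 ≤ L := Real.logb_nonneg hb hx
  set s := Finset.Icc ⌈n * L⌉₊ ⌊n * (L + e)⌋₊
  have hfiber (i : Fin n) : {j : ℕ | j * n + i ∈ s} ⊆ coveringRounds (geomStrategy b n i) μ x := by
    intro j (hj : j * n + i ∈ s)
    obtain ⟨hlow, hhigh⟩ := Finset.mem_Icc.1 hj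
    exact hbL ▸ mem_coveringRounds_geomStrategy hb (NeZero.ne n) he (Nat.ceil_le.1 hlow)
      ((Nat.le_floor_iff (by positivity)).1 hhigh)
  have hfinite (i : Fin n) : (coveringRounds (geomStrategy b n i) μ x).Finite :=
    (finite_Iic _).subset (coveringRounds_subset_Iic (one_le_geomStrategy hb.le i) x)
  calc n * e - 1 = n * (L + e) - n * L - 1 := by ring
    _ ≤ s.card := sub_sub_one_le_card_Icc_ceil_floor (by positivity) _
    _ = ∑ i : Fin n, ({j : ℕ | j * n + i ∈ s}.ncard : ℝ) := by
        rw [← sum_ncard_residue_eq_card (n := n) s, Nat.cast_sum]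
    _ ≤ _ := Finset.sum_le_sum fun i _ ↦ Nat.cast_le.2 (ncard_le_ncard (hfiber i) (hfinite i))

lemma feasible_of_criticalBudget_lt {η : ℝ} (hη : 1 < η) (hμ : criticalBudget η < μ) :
    Feasible η μ := by
  set b := η / (η - 1) with hb_def
  have hb : 1 < b := by rw [hb_def, one_lt_div] <;> linarith
  have hb1 : 0 < b - 1 := sub_pos.2 hb
  have hμ0 : 0 < μ := (criticalBudget_pos hη).trans hμ
  set e := Real.logb b (μ * (b - 1))
  have he : b ^ e = μ * (b - 1) := Real.rpow_logb (by linarith) hb.ne' (by positivity)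
  have hηe : η < e := by
    rw [← Real.rpow_lt_rpow_left_iff hb, he, ← criticalBudget_mul_div_sub_one hη]
    exact mul_lt_mul_of_pos_right hμ hb1
  obtain ⟨n, hn⟩ := exists_nat_gt (1 / (e - η))
  have hn0 : (0 : ℝ) < n := lt_trans (one_div_pos.2 (sub_pos.2 hηe)) hn
  have : NeZero n := ⟨Nat.cast_ne_zero.1 hn0.ne'⟩
  refine ⟨n, fun _ ↦ (n : ℝ)⁻¹, fun i ↦ geomStrategy b n i, fun _ ↦ inv_pos.2 hn0, ?_,
    fun i j ↦ one_le_geomStrategy hb.le i j, fun x hx ↦ ?_⟩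
  · rw [Finset.sum_const, Finset.card_univ, Fintype.card_fin, nsmul_eq_mul,
      mul_inv_cancel₀ hn0.ne']
  · rw [div_lt_iff₀ (sub_pos.2 hηe)] at hn
    rw [← Finset.mul_sum, le_inv_mul_iff₀ hn0]
    linarith [le_sum_ncard_coveringRounds_geomStrategy (n := n) hb (by linarith) he hx]

end UpperBound

end FractionalORC

open FractionalORC

/-- The optimal competitive ratio `C(η)` for fractional one-ray retrieval with
returns equals `2 η^η/(η-1)^(η-1) + 1`.  Finitely many robots with positive
weights summing to `1` move on the ray; a point `x ≥ 1` is `λ`-covered by a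
robot in round `j` iff `x ≤ t j` and the sum of the previous turning points is
at most `((λ-1)/2)·x`; feasibility requires, for every `x ≥ 1`, total covering
weight (counted with round multiplicity) at least `η`. -/
theorem fractional_orc_competitive_ratio (η : ℝ) (hη : 1 < η) :
    sInf {lam : ℝ | 1 < lam ∧
        ∃ (n : ℕ) (w : Fin n → ℝ) (t : Fin n → ℕ → ℝ),
          (∀ i, 0 < w i) ∧ (∑ i, w i) = 1 ∧ (∀ i j, 1 ≤ t i j) ∧
          ∀ x : ℝ, 1 ≤ x →
            η ≤ ∑ i, w i * ({j : ℕ | x ≤ t i j ∧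
                  (∑ l ∈ Finset.range j, t i l) ≤ ((lam - 1) / 2) * x}.ncard : ℝ)}
      = 2 * η ^ η / (η - 1) ^ (η - 1) + 1 := by
  change sInf {lam | 1 < lam ∧ Feasible η ((lam - 1) / 2)} = _
  rw [mul_div_assoc, ← criticalBudget]
  have feasible_of_gt {lam : ℝ} (h : 2 * criticalBudget η + 1 < lam) :
      1 < lam ∧ Feasible η ((lam - 1) / 2) :=
    ⟨by linarith [criticalBudget_pos hη], feasible_of_criticalBudget_lt hη (by linarith)⟩
  refine csInf_eq_of_forall_ge_of_forall_gt_exists_lt ⟨_, feasible_of_gt (lt_add_one _)⟩ ?_ ?_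
  · rintro lam ⟨hlam, hfeas⟩
    linarith [hfeas.criticalBudget_le hη (by linarith)]
  · intro v hv
    obtain ⟨lam, hlam, hlt⟩ := exists_between hv
    exact ⟨lam, feasible_of_gt hlam, hlt⟩
end
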